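/- arXiv:1606.06935 — 3 statements merged into one kernel-verified Lean document; each statement's English description precedes it below -/
import Mathlib

section
/- For every real x > 0, the limit λ(x) := lim_{k→∞} ρ(⌊4^k x⌋)/√(4^k x) exists and equals (ρ(⌊x⌋) + a(x))/√x. Moreover, for every positive integer n, λ(n) = (ρ(n) + 1)/√n. -/
open Filter

/-- The partial sum `Σ_w(i, n) = w(i) + w(i+1) + ⋯ + w(i+n−1)`. -/
def pSum (w : ℕ → ℤ) (i n : ℕ) : ℤ := ∑ j ∈ Finset.range n, w (i + j)

/-- The `j`-th digit (`j ≥ 1`) of the 4-adic expansion of `x > 0` chosen with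
infinitely many digits `≠ 3` (the greedy expansion):
`x_j = ⌊4^j x⌋ − 4⌊4^(j−1) x⌋`. -/
noncomputable def digit (x : ℝ) (j : ℕ) : ℤ :=
  ⌊(4 : ℝ) ^ j * x⌋ - 4 * ⌊(4 : ℝ) ^ (j - 1) * x⌋

/-- The coefficient `d`: `d(0) = d(2) = 1`, `d(1) = 0`, `d(3) = 2`. -/
def dcoef (y : ℤ) : ℤ := if y = 0 ∨ y = 2 then 1 else if y = 1 then 0 else 2

/-- `a_j(x) = −1` if `4^j x < 1`, and `a_j(x) = ΔM(⌊4^j x⌋ − 1)` otherwise,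
where `ΔM(n) = M(n+1) − M(n)`. -/
noncomputable def acoef (M : ℕ → ℤ) (x : ℝ) (j : ℕ) : ℤ :=
  if (4 : ℝ) ^ j * x < 1 then -1
  else M (⌊(4 : ℝ) ^ j * x⌋).toNat - M ((⌊(4 : ℝ) ^ j * x⌋).toNat - 1)

/-- `a(x) = Σ_{j ≥ 1} d(x_j) a_j(x) 2^{−j}`. -/
noncomputable def afun (M : ℕ → ℤ) (x : ℝ) : ℝ :=
  ∑' j : ℕ, ((dcoef (digit x (j + 1)) * acoef M x (j + 1) : ℤ) : ℝ) / 2 ^ (j + 1)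

/-- Core recursion, with `S` the prefix sums of `r` and `s m = (-1)^m r m`. -/
theorem core_rec (r s S M : ℕ → ℤ)
    (hr1 : ∀ m, r m = 1 ∨ r m = -1)
    (hs1 : ∀ m, s m = 1 ∨ s m = -1)
    (hSs : ∀ m, S (m + 1) = S m + r m)
    (s0 : ∀ m, s (4 * m) = r m) (s2 : ∀ m, s (4 * m + 2) = s m)
    (s3 : ∀ m, s (4 * m + 3) = s m)
    (S0 : ∀ m, S (4 * m) = 2 * S m) (S1 : ∀ m, S (4 * m + 1) = 2 * S m + r m)
    (S2 : ∀ m, S (4 * m + 2) = 2 * S m + 2 * r m)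
    (S3 : ∀ m, S (4 * m + 3) = 2 * S m + 2 * r m + s m)
    (hle : ∀ n i, S (i + n) - S i ≤ M n)
    (hex : ∀ n, ∃ i, S (i + n) - S i = M n)
    (hstep : ∀ n, M (n + 1) = M n + 1 ∨ M (n + 1) = M n - 1)
    (hM1 : M 1 = 1)
    (base : ∃ p, S (p + 2) - S (p + 1) = 1 ∧ s p = -1 ∧ s (p + 1) = 1) :
    (∀ n, 1 ≤ n → M (4 * n) = 2 * M n + 2) ∧ (∀ n, M (4 * n + 1) = 2 * M n + 1) ∧
    (∀ n, M (4 * n + 2) = M n + M (n + 1) + 1) ∧ (∀ n, M (4 * n + 3) = 2 * M (n + 1) + 1) := by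
  have hM0 : M 0 = 0 := by
    obtain ⟨i, hi⟩ := hex 0
    simp at hi
    omega
  have up1 : ∀ n, M (4 * n + 1) ≤ 2 * M n + 1 := by
    intro n
    obtain ⟨i, hi⟩ := hex (4 * n + 1)
    obtain ⟨p, h | h | h | h⟩ : ∃ p, i = 4 * p ∨ i = 4 * p + 1 ∨ i = 4 * p + 2 ∨ i = 4 * p + 3 :=
      ⟨i / 4, by omega⟩
    all_goals
      have a1 := hle n p
      have a2 := hle n (p + 1)
      rw [show p + 1 + n = p + n + 1 by ring, hSs, hSs] at a2
      have b1 := hr1 p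
      have b2 := hr1 (p + n)
      have b3 := hs1 p
      have b4 := hs1 (p + n)
      subst h
    · rw [show 4 * p + (4 * n + 1) = 4 * (p + n) + 1 by ring, S0, S1] at hi
      omega
    · rw [show 4 * p + 1 + (4 * n + 1) = 4 * (p + n) + 2 by ring, S1, S2] at hi
      omega
    · rw [show 4 * p + 2 + (4 * n + 1) = 4 * (p + n) + 3 by ring, S2, S3] at hi
      omega
    · rw [show 4 * p + 3 + (4 * n + 1) = 4 * (p + n + 1) by ring, S3, S0, hSs] at hi
      omega
  have up3 : ∀ n, M (4 * n + 3) ≤ 2 * M (n + 1) + 1 := by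
    intro n
    obtain ⟨i, hi⟩ := hex (4 * n + 3)
    obtain ⟨p, h | h | h | h⟩ : ∃ p, i = 4 * p ∨ i = 4 * p + 1 ∨ i = 4 * p + 2 ∨ i = 4 * p + 3 :=
      ⟨i / 4, by omega⟩
    all_goals
      have a1 := hle (n + 1) p
      have a2 := hle (n + 1) (p + 1)
      rw [show p + 1 + (n + 1) = p + n + 1 + 1 by ring, hSs, hSs, hSs] at a2
      rw [show p + (n + 1) = p + n + 1 by ring, hSs] at a1
      have b1 := hr1 p
      have b2 := hr1 (p + n)
      have b3 := hs1 p
      have b4 := hs1 (p + n)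
      have b5 := hr1 (p + n + 1)
      subst h
    · rw [show 4 * p + (4 * n + 3) = 4 * (p + n) + 3 by ring, S0, S3] at hi
      omega
    · rw [show 4 * p + 1 + (4 * n + 3) = 4 * (p + n + 1) by ring, S1, S0, hSs] at hi
      omega
    · rw [show 4 * p + 2 + (4 * n + 3) = 4 * (p + n + 1) + 1 by ring, S2, S1, hSs] at hi
      omega
    · rw [show 4 * p + 3 + (4 * n + 3) = 4 * (p + n + 1) + 2 by ring, S3, S2, hSs] at hi
      omega
  have up2 : ∀ n, M (4 * n + 2) ≤ M n + M (n + 1) + 1 := by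
    intro n
    obtain ⟨i, hi⟩ := hex (4 * n + 2)
    have hst := hstep n
    obtain ⟨p, h | h | h | h⟩ : ∃ p, i = 4 * p ∨ i = 4 * p + 1 ∨ i = 4 * p + 2 ∨ i = 4 * p + 3 :=
      ⟨i / 4, by omega⟩
    all_goals
      have a1 := hle (n + 1) p
      have a2 := hle (n + 1) (p + 1)
      have a3 := hle n (p + 1)
      rw [show p + 1 + n = p + n + 1 by ring, hSs, hSs] at a3
      rw [show p + 1 + (n + 1) = p + n + 1 + 1 by ring, hSs, hSs, hSs] at a2
      rw [show p + (n + 1) = p + n + 1 by ring, hSs] at a1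
      have b1 := hr1 p
      have b2 := hr1 (p + n)
      have b3 := hs1 p
      have b4 := hs1 (p + n)
      have b5 := hr1 (p + n + 1)
      subst h
    · rw [show 4 * p + (4 * n + 2) = 4 * (p + n) + 2 by ring, S0, S2] at hi
      omega
    · rw [show 4 * p + 1 + (4 * n + 2) = 4 * (p + n) + 3 by ring, S1, S3] at hi
      omega
    · rw [show 4 * p + 2 + (4 * n + 2) = 4 * (p + n + 1) by ring, S2, S0, hSs] at hi
      omega
    · rw [show 4 * p + 3 + (4 * n + 2) = 4 * (p + n + 1) + 1 by ring, S3, S1, hSs] at hi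
      omega
  have up0 : ∀ n, M (4 * n) ≤ 2 * M n + 2 := by
    intro n
    have := up1 n
    have := hstep (4 * n)
    omega
  -- the strengthened induction
  have key : ∀ n, 1 ≤ n → ∃ p, S (p + n + 1) - S (p + 1) = M n ∧ s p = -1 ∧ s (p + n) = 1 := by
    intro n
    induction n using Nat.strong_induction_on with
    | _ N ih =>
    intro hN
    by_cases hN1 : N = 1
    · subst hN1
      obtain ⟨p, h1, h2, h3⟩ := base
      exact ⟨p, by rw [hM1]; exact h1, h2, h3⟩
    obtain ⟨n, h | h | h | h⟩ : ∃ n, N = 4 * n ∨ N = 4 * n + 1 ∨ N = 4 * n + 2 ∨ N = 4 * n + 3 :=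
      ⟨N / 4, by omega⟩
    · obtain ⟨p, h1, h2, h3⟩ := ih n (by omega) (by omega)
      rw [hSs, hSs] at h1
      refine ⟨4 * p + 2, ?_, ?_, ?_⟩
      · have u := up0 n
        have l := hle (4 * n) (4 * p + 3)
        rw [show 4 * p + 3 + 4 * n = 4 * (p + n) + 3 by ring, S3, S3] at l
        rw [h, show 4 * p + 2 + 4 * n + 1 = 4 * (p + n) + 3 by ring,
          show 4 * p + 2 + 1 = 4 * p + 3 by ring, S3, S3]
        omega
      · rw [s2, h2]
      · rw [h, show 4 * p + 2 + 4 * n = 4 * (p + n) + 2 by ring, s2, h3]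
    · obtain ⟨p, h1, h2, h3⟩ := ih n (by omega) (by omega)
      rw [hSs, hSs] at h1
      refine ⟨4 * p + 2, ?_, ?_, ?_⟩
      · have u := up1 n
        have l := hle (4 * n + 1) (4 * p + 3)
        rw [show 4 * p + 3 + (4 * n + 1) = 4 * (p + n + 1) by ring, S3, S0, hSs] at l
        rw [h, show 4 * p + 2 + (4 * n + 1) + 1 = 4 * (p + n + 1) by ring,
          show 4 * p + 2 + 1 = 4 * p + 3 by ring, S3, S0, hSs]
        omega
      · rw [s2, h2]
      · rw [h, show 4 * p + 2 + (4 * n + 1) = 4 * (p + n) + 3 by ring, s3, h3]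
    · have u := up2 n
      rcases hstep n with hs | hs
      · obtain ⟨p, h1, h2, h3⟩ := ih (n + 1) (by omega) (by omega)
        have l2 := hle n (p + 1)
        rw [show p + (n + 1) + 1 = p + n + 1 + 1 by ring, hSs, hSs, hSs] at h1
        rw [show p + 1 + n = p + n + 1 by ring, hSs, hSs] at l2
        have b := hr1 (p + n + 1)
        refine ⟨4 * p + 2, ?_, ?_, ?_⟩
        · have l := hle (4 * n + 2) (4 * p + 3)
          rw [show 4 * p + 3 + (4 * n + 2) = 4 * (p + n + 1) + 1 by ring, S3, S1, hSs] at l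
          rw [h, show 4 * p + 2 + (4 * n + 2) + 1 = 4 * (p + n + 1) + 1 by ring,
            show 4 * p + 2 + 1 = 4 * p + 3 by ring, S3, S1, hSs]
          omega
        · rw [s2, h2]
        · rw [h, show 4 * p + 2 + (4 * n + 2) = 4 * (p + n + 1) by ring, s0]
          omega
      · have hn : n ≠ 0 := by
          rintro rfl
          simp [hM0, hM1] at hs
        obtain ⟨p, h1, h2, h3⟩ := ih n (by omega) (by omega)
        have l2 := hle (n + 1) p
        rw [hSs, hSs] at h1
        rw [show p + (n + 1) = p + n + 1 by ring, hSs] at l2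
        have b := hr1 p
        refine ⟨4 * p, ?_, ?_, ?_⟩
        · have l := hle (4 * n + 2) (4 * p + 1)
          rw [show 4 * p + 1 + (4 * n + 2) = 4 * (p + n) + 3 by ring, S3, S1] at l
          rw [h, show 4 * p + (4 * n + 2) + 1 = 4 * (p + n) + 3 by ring, S3, S1]
          omega
        · rw [s0]
          omega
        · rw [h, show 4 * p + (4 * n + 2) = 4 * (p + n) + 2 by ring, s2, h3]
    · obtain ⟨p, h1, h2, h3⟩ := ih (n + 1) (by omega) (by omega)
      rw [show p + (n + 1) + 1 = p + n + 1 + 1 by ring, hSs, hSs, hSs] at h1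
      have h3' : s (p + n + 1) = 1 := h3
      refine ⟨4 * p + 3, ?_, ?_, ?_⟩
      · have u := up3 n
        have l := hle (4 * n + 3) (4 * (p + 1))
        rw [show 4 * (p + 1) + (4 * n + 3) = 4 * (p + n + 1) + 3 by ring, S3, S0, hSs, hSs] at l
        rw [h, show 4 * p + 3 + (4 * n + 3) + 1 = 4 * (p + n + 1) + 3 by ring,
          show 4 * p + 3 + 1 = 4 * (p + 1) by ring, S3, S0, hSs, hSs]
        omega
      · rw [s3, h2]
      · rw [h, show 4 * p + 3 + (4 * n + 3) = 4 * (p + n + 1) + 2 by ring, s2, h3']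
  have r0 : ∀ n, 1 ≤ n → M (4 * n) = 2 * M n + 2 := by
    intro n hn
    obtain ⟨p, h1, h2, h3⟩ := key n hn
    rw [hSs, hSs] at h1
    have u := up0 n
    have l := hle (4 * n) (4 * p + 3)
    rw [show 4 * p + 3 + 4 * n = 4 * (p + n) + 3 by ring, S3, S3] at l
    omega
  refine ⟨r0, ?_, ?_, ?_⟩
  · intro n
    rcases Nat.eq_zero_or_pos n with rfl | hn
    · simp [hM0, hM1]
    · have := r0 n hn
      have := up1 n
      have := hstep (4 * n)
      omega
  · intro n
    have u := up2 n
    rcases hstep n with h | h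
    · obtain ⟨i, hi⟩ := hex (n + 1)
      have l := hle (4 * n + 2) (4 * i)
      rw [show 4 * i + (4 * n + 2) = 4 * (i + n) + 2 by ring, S2, S0] at l
      rw [show i + (n + 1) = i + n + 1 by ring, hSs] at hi
      omega
    · obtain ⟨i, hi⟩ := hex n
      -- the optimum for `n` (`n ≥ 1` here) provided by `key`
      have hn : n ≠ 0 := by
        rintro rfl
        simp [hM0, hM1] at h
      obtain ⟨p, h1, h2, h3⟩ := key n (by omega)
      have l := hle (4 * n + 2) (4 * p + 2)
      rw [show 4 * p + 2 + (4 * n + 2) = 4 * (p + n + 1) by ring, S2, S0] at l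
      rw [hSs p] at h1
      omega
  · intro n
    have := r0 (n + 1) (by omega)
    have := up3 n
    have h := hstep (4 * n + 3)
    rw [show 4 * n + 3 + 1 = 4 * (n + 1) by ring] at h
    omega

/-- The recursion for `M`, from the frozen hypotheses. -/
theorem M_rec
    (r : ℕ → ℤ) (hr0 : r 0 = 1)
    (hre : ∀ n, r (2 * n) = r n)
    (hro : ∀ n, r (2 * n + 1) = (-1) ^ n * r n)
    (M : ℕ → ℤ)
    (hM : ∀ n, IsGreatest (Set.range fun i => pSum r i n) (M n)) :
    (M 0 = 0 ∧ ∀ n, M (n + 1) = M n + 1 ∨ M (n + 1) = M n - 1) ∧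
    (∀ n, 1 ≤ n → M (4 * n) = 2 * M n + 2) ∧ (∀ n, M (4 * n + 1) = 2 * M n + 1) ∧
    (∀ n, M (4 * n + 2) = M n + M (n + 1) + 1) ∧ (∀ n, M (4 * n + 3) = 2 * M (n + 1) + 1) := by
  have hsg : ∀ m : ℕ, ((-1 : ℤ)) ^ m = 1 ∨ ((-1 : ℤ)) ^ m = -1 := fun m => neg_one_pow_eq_or ℤ m
  have hr1 : ∀ m, r m = 1 ∨ r m = -1 := by
    intro m
    induction m using Nat.strong_induction_on with
    | _ m ih =>
    rcases Nat.even_or_odd' m with ⟨k, rfl | rfl⟩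
    · rcases Nat.eq_zero_or_pos k with rfl | hk
      · left
        simpa using hr0
      · rw [hre]
        exact ih k (by omega)
    · rw [hro]
      rcases hsg k with h | h <;> rcases ih k (by omega) with h' | h' <;> simp [h, h']
  have hs1 : ∀ m, (-1) ^ m * r m = 1 ∨ (-1) ^ m * r m = -1 := by
    intro m
    rcases hsg m with h | h <;> rcases hr1 m with h' | h' <;> simp [h, h']
  have e0 : ∀ m, r (4 * m) = r m := by
    intro m
    rw [show 4 * m = 2 * (2 * m) by ring, hre, hre]
  have e1 : ∀ m, r (4 * m + 1) = r m := by
    intro m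
    rw [show 4 * m + 1 = 2 * (2 * m) + 1 by ring, hro, hre]
    simp
  have e2 : ∀ m, r (4 * m + 2) = (-1) ^ m * r m := by
    intro m
    rw [show 4 * m + 2 = 2 * (2 * m + 1) by ring, hre, hro]
  have e3 : ∀ m, r (4 * m + 3) = - ((-1) ^ m * r m) := by
    intro m
    rw [show 4 * m + 3 = 2 * (2 * m + 1) + 1 by ring, hro, hro]
    simp [pow_succ]
  have p4 : ∀ m, ((-1 : ℤ)) ^ (4 * m) = 1 := by
    intro m
    rw [pow_mul]
    norm_num
  let S : ℕ → ℤ := fun m => ∑ j ∈ Finset.range m, r j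
  have hSs : ∀ m, S (m + 1) = S m + r m := fun m => Finset.sum_range_succ _ _
  have S0 : ∀ m, S (4 * m) = 2 * S m := by
    intro m
    induction m with
    | zero => simp [S]
    | succ m ih =>
      rw [show 4 * (m + 1) = 4 * m + 1 + 1 + 1 + 1 by ring, hSs, hSs, hSs, hSs, hSs, ih, e0, e1,
        e2, e3]
      ring
  have S1 : ∀ m, S (4 * m + 1) = 2 * S m + r m := by
    intro m
    rw [hSs, S0, e0]
  have S2 : ∀ m, S (4 * m + 2) = 2 * S m + 2 * r m := by
    intro m
    rw [hSs, S1, e1]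
    ring
  have S3 : ∀ m, S (4 * m + 3) = 2 * S m + 2 * r m + (-1) ^ m * r m := by
    intro m
    rw [hSs, S2, e2]
  have hp : ∀ i n, pSum r i n = S (i + n) - S i := by
    intro i n
    simp only [pSum, S]
    rw [Finset.sum_range_add]
    ring
  have hle : ∀ n i, S (i + n) - S i ≤ M n := by
    intro n i
    rw [← hp]
    exact (hM n).2 ⟨i, rfl⟩
  have hex : ∀ n, ∃ i, S (i + n) - S i = M n := by
    intro n
    obtain ⟨i, hi⟩ := (hM n).1
    exact ⟨i, by rw [← hp]; exact hi⟩
  have hpar : ∀ m, S m % 2 = (m : ℤ) % 2 := by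
    intro m
    induction m with
    | zero => simp [S]
    | succ m ih =>
      have := hr1 m
      have := hSs m
      push_cast
      omega
  have hMpar : ∀ n, M n % 2 = (n : ℤ) % 2 := by
    intro n
    obtain ⟨i, hi⟩ := hex n
    have h1 := hpar (i + n)
    have h2 := hpar i
    push_cast at h1
    omega
  have hstep : ∀ n, M (n + 1) = M n + 1 ∨ M (n + 1) = M n - 1 := by
    intro n
    obtain ⟨i, hi⟩ := hex n
    obtain ⟨k, hk⟩ := hex (n + 1)
    have h1 := hle (n + 1) i
    have h2 := hle n k
    rw [← add_assoc, hSs] at h1 hk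
    have := hr1 (i + n)
    have := hr1 (k + n)
    have h3 := hMpar n
    have h4 := hMpar (n + 1)
    push_cast at h4
    omega
  have hM0 : M 0 = 0 := by
    obtain ⟨i, hi⟩ := hex 0
    simp at hi
    omega
  have rv1 : r 1 = 1 := by simpa [hr0] using e1 0
  have rv2 : r 2 = 1 := by simpa [hr0] using e2 0
  have hM1 : M 1 = 1 := by
    have h1 := hle 1 0
    have h2 : S (0 + 1) = S 0 + r 0 := hSs 0
    rcases hstep 0 with h | h <;> simp only [zero_add] at * <;> omega
  refine ⟨⟨hM0, hstep⟩, ?_⟩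
  refine core_rec r (fun m => (-1) ^ m * r m) S M hr1 hs1 hSs ?_ ?_ ?_ S0 S1 S2 S3 hle hex hstep
    hM1 ⟨1, ?_, ?_, ?_⟩
  · intro m
    rw [p4, e0, one_mul]
  · intro m
    rw [e2, pow_add, p4]
    norm_num
  · intro m
    rw [e3, pow_add, p4]
    norm_num
  · have h2 : S (2 + 1) = S 2 + r 2 := hSs 2
    simp only [show 1 + 2 = 2 + 1 by norm_num, show 1 + 1 = 2 by norm_num]
    omega
  · simp [rv1]
  · simp [rv2]

/-- One step of the telescoping. -/
theorem rho_step (M : ℕ → ℤ) (hM0 : M 0 = 0)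
    (r0 : ∀ n, 1 ≤ n → M (4 * n) = 2 * M n + 2) (r1 : ∀ n, M (4 * n + 1) = 2 * M n + 1)
    (r2 : ∀ n, M (4 * n + 2) = M n + M (n + 1) + 1)
    (r3 : ∀ n, M (4 * n + 3) = 2 * M (n + 1) + 1) (n b : ℕ) (hb : b < 4) :
    M (4 * n + b) + 1 = 2 * (M n + 1) +
      dcoef b * (if 4 * n + b = 0 then -1 else M (4 * n + b) - M (4 * n + b - 1)) := by
  have h1 := r1 n
  have h2 := r2 n
  have h3 := r3 n
  interval_cases b
  · rcases n with _ | n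
    · simp [hM0, dcoef]
    · have h0 := r0 (n + 1) (by omega)
      have h4 := r3 n
      rw [if_neg (by omega), show 4 * (n + 1) + 0 - 1 = 4 * n + 3 by omega]
      simp only [dcoef, add_zero]
      norm_num
      omega
  · simp [dcoef]
    omega
  · rw [if_neg (by omega), show 4 * n + 2 - 1 = 4 * n + 1 by omega]
    simp [dcoef]
    omega
  · rw [if_neg (by omega), show 4 * n + 3 - 1 = 4 * n + 2 by omega]
    simp [dcoef]
    omega

theorem sqrt_four_pow_mul (k : ℕ) (x : ℝ) :
    Real.sqrt ((4 : ℝ) ^ k * x) = 2 ^ k * Real.sqrt x := by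
  rw [Real.sqrt_mul (by positivity), show (4 : ℝ) ^ k = (2 ^ k) ^ 2 by
    rw [← pow_mul, mul_comm, pow_mul]; norm_num, Real.sqrt_sq (by positivity)]

/-- For every real `x > 0` the limit
`λ(x) = lim_k ρ(⌊4^k x⌋)/√(4^k x)` exists and equals `(ρ(⌊x⌋) + a(x))/√x`,
where `ρ(n) = M(n) + 1`. Moreover, for every positive integer `n`,
`λ(n) = (ρ(n) + 1)/√n`. -/
theorem tendsto_rho_div_sqrt
    (r : ℕ → ℤ) (hr0 : r 0 = 1)
    (hre : ∀ n, r (2 * n) = r n)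
    (hro : ∀ n, r (2 * n + 1) = (-1) ^ n * r n)
    (M : ℕ → ℤ)
    (hM : ∀ n, IsGreatest (Set.range fun i => pSum r i n) (M n))
    (ρ : ℕ → ℤ) (hρ : ∀ n, ρ n = M n + 1) :
    (∀ x : ℝ, 0 < x →
      Tendsto
        (fun k : ℕ => ((ρ (⌊(4 : ℝ) ^ k * x⌋).toNat : ℤ) : ℝ) / Real.sqrt ((4 : ℝ) ^ k * x))
        atTop
        (nhds ((((ρ (⌊x⌋).toNat : ℤ) : ℝ) + afun M x) / Real.sqrt x))) ∧
    (∀ n : ℕ, 1 ≤ n →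
      Tendsto
        (fun k : ℕ => ((ρ (4 ^ k * n) : ℤ) : ℝ) / Real.sqrt ((4 : ℝ) ^ k * (n : ℝ)))
        atTop
        (nhds ((((ρ n : ℤ) : ℝ) + 1) / Real.sqrt (n : ℝ)))) := by
  obtain ⟨⟨hM0, hstep⟩, r0, r1, r2, r3⟩ := M_rec r hr0 hre hro M hM
  refine ⟨?_, ?_⟩
  · intro x hx
    have hfl : ∀ k : ℕ, ∃ m : ℕ, ⌊(4 : ℝ) ^ k * x⌋ = (m : ℤ) := fun k =>
      Int.eq_ofNat_of_zero_le (Int.floor_nonneg.2 (by positivity))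
    -- one step
    have step : ∀ k : ℕ, ρ (⌊(4 : ℝ) ^ (k + 1) * x⌋).toNat =
        2 * ρ (⌊(4 : ℝ) ^ k * x⌋).toNat + dcoef (digit x (k + 1)) * acoef M x (k + 1) := by
      intro k
      obtain ⟨n, hn⟩ := hfl k
      obtain ⟨m, hm⟩ := hfl (k + 1)
      have hn' := Int.floor_eq_iff.1 hn
      have hm' := Int.floor_eq_iff.1 hm
      rw [pow_succ] at hm'
      have hlo : 4 * n ≤ m := by
        have : ((4 * n : ℕ) : ℝ) < ((m + 1 : ℕ) : ℝ) := by
          push_cast at hn' hm' ⊢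
          linarith [hn'.1, hm'.2]
        have := Nat.cast_lt.1 this
        omega
      have hhi : m < 4 * n + 4 := by
        have : ((m : ℕ) : ℝ) < ((4 * n + 4 : ℕ) : ℝ) := by
          push_cast at hn' hm' ⊢
          linarith [hn'.2, hm'.1]
        exact Nat.cast_lt.1 this
      obtain ⟨b, rfl⟩ := Nat.exists_eq_add_of_le hlo
      have hdig : digit x (k + 1) = (b : ℤ) := by
        unfold digit
        rw [Nat.add_sub_cancel, hm, hn]
        push_cast
        ring
      have hac : acoef M x (k + 1) =
          if 4 * n + b = 0 then -1 else M (4 * n + b) - M (4 * n + b - 1) := by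
        unfold acoef
        rw [hm, Int.toNat_natCast]
        have hiff : (4 : ℝ) ^ (k + 1) * x < 1 ↔ 4 * n + b = 0 := by
          have h1 : (4 : ℝ) ^ (k + 1) * x < 1 ↔ ⌊(4 : ℝ) ^ (k + 1) * x⌋ < 1 := by
            rw [Int.floor_lt]
            norm_num
          rw [h1, hm]
          omega
        simp only [hiff]
      rw [hdig, hac, hm, hn, Int.toNat_natCast, Int.toNat_natCast, hρ, hρ]
      exact rho_step M hM0 r0 r1 r2 r3 n b (by omega)
    set f : ℕ → ℝ := fun j =>
      ((dcoef (digit x (j + 1)) * acoef M x (j + 1) : ℤ) : ℝ) / 2 ^ (j + 1) with hf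
    have tel : ∀ k : ℕ, ((ρ (⌊(4 : ℝ) ^ k * x⌋).toNat : ℤ) : ℝ) / 2 ^ k =
        ((ρ (⌊x⌋).toNat : ℤ) : ℝ) + ∑ j ∈ Finset.range k, f j := by
      intro k
      induction k with
      | zero => simp
      | succ k ih =>
        rw [Finset.sum_range_succ, ← add_assoc, ← ih, step k, hf]
        push_cast
        rw [pow_succ]
        field_simp
    have hd : ∀ y, |dcoef y| ≤ 2 := by
      intro y
      unfold dcoef
      split_ifs <;> norm_num
    have ha : ∀ j, |acoef M x j| ≤ 1 := by
      intro j
      unfold acoef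
      split_ifs with h
      · norm_num
      · generalize (⌊(4 : ℝ) ^ j * x⌋).toNat = m
        rcases m with _ | m
        · simp
        · rcases hstep m with h | h <;> simp [h]
    have hsum : Summable f := by
      refine Summable.of_norm_bounded (g := fun j : ℕ => (1 / 2 : ℝ) ^ j)
        (summable_geometric_of_lt_one (by norm_num) (by norm_num)) ?_
      intro j
      have h1 : |dcoef (digit x (j + 1)) * acoef M x (j + 1)| ≤ 2 := by
        rw [abs_mul]
        nlinarith [hd (digit x (j + 1)), ha (j + 1), abs_nonneg (dcoef (digit x (j + 1))),
          abs_nonneg (acoef M x (j + 1))]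
      have h2 : |((dcoef (digit x (j + 1)) * acoef M x (j + 1) : ℤ) : ℝ)| ≤ 2 := by
        exact_mod_cast h1
      rw [hf, Real.norm_eq_abs, abs_div, abs_of_pos (by positivity : (0 : ℝ) < 2 ^ (j + 1)),
        div_le_iff₀ (by positivity)]
      calc _ ≤ (2 : ℝ) := h2
        _ = (1 / 2) ^ j * 2 ^ (j + 1) := by
          rw [pow_succ, ← mul_assoc, ← mul_pow]
          norm_num
    have hlim : Tendsto (fun k : ℕ => ((ρ (⌊x⌋).toNat : ℤ) : ℝ) + ∑ j ∈ Finset.range k, f j)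
        atTop (nhds (((ρ (⌊x⌋).toNat : ℤ) : ℝ) + afun M x)) :=
      tendsto_const_nhds.add hsum.hasSum.tendsto_sum_nat
    refine (hlim.div_const (Real.sqrt x)).congr ?_
    intro k
    rw [← tel, sqrt_four_pow_mul, div_div]
  · intro n hn
    have hpow : ∀ k : ℕ, M (4 ^ k * n) + 2 = 2 ^ k * (M n + 2) := by
      intro k
      induction k with
      | zero => simp
      | succ k ih =>
        have h := r0 (4 ^ k * n) (Nat.mul_pos (by positivity) hn)
        rw [show 4 ^ (k + 1) * n = 4 * (4 ^ k * n) by ring, h, pow_succ]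
        linarith
    have hlim : Tendsto (fun k : ℕ => (((ρ n : ℤ) : ℝ) + 1) - (1 / 2 : ℝ) ^ k)
        atTop (nhds ((((ρ n : ℤ) : ℝ) + 1) - 0)) :=
      tendsto_const_nhds.sub (tendsto_pow_atTop_nhds_zero_of_lt_one (by norm_num) (by norm_num))
    rw [sub_zero] at hlim
    refine (hlim.div_const (Real.sqrt n)).congr ?_
    intro k
    have h : ((M (4 ^ k * n) : ℤ) : ℝ) + 2 = 2 ^ k * ((M n : ℝ) + 2) := by exact_mod_cast hpow k
    rw [sqrt_four_pow_mul, ← div_div]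
    congr 1
    rw [hρ, hρ, one_div, inv_pow]
    push_cast
    rw [eq_div_iff (by positivity), sub_mul, inv_mul_cancel₀ (by positivity)]
    linarith
end

section
/- There exists a constant c > 0 such that for all x, y ∈ (0, 1), |a(x) − a(y)| ≤ c·|x − y|^{1/2}; in other words, the function a is Hölder continuous of exponent 1/2 on (0, 1). -/
/-- Prefix sums. -/
def preS (r : ℕ → ℤ) (n : ℕ) : ℤ := ∑ j ∈ Finset.range n, r j

theorem preS_succ (r : ℕ → ℤ) (n : ℕ) : preS r (n + 1) = preS r n + r n := by
  simp [preS, Finset.sum_range_succ]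

theorem pSum_eq (r : ℕ → ℤ) (i n : ℕ) : pSum r i n = preS r (i + n) - preS r i := by
  unfold pSum preS
  rw [Finset.sum_range_add]; ring

/-- The hypotheses on the Rudin-Shapiro sequence, in base 4. -/
structure RS (r : ℕ → ℤ) : Prop where
  h0 : r 0 = 1
  he : ∀ n, r (2 * n) = r n
  ho : ∀ n, r (2 * n + 1) = (-1) ^ n * r n

namespace RS

variable {r : ℕ → ℤ}

theorem r4 (h : RS r) (n : ℕ) : r (4 * n) = r n := by
  rw [show 4 * n = 2 * (2 * n) by ring, h.he, h.he]

theorem r41 (h : RS r) (n : ℕ) : r (4 * n + 1) = r n := by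
  rw [show 4 * n + 1 = 2 * (2 * n) + 1 by ring, h.ho, h.he, pow_mul]; simp

theorem r42 (h : RS r) (n : ℕ) : r (4 * n + 2) = r (2 * n + 1) := by
  rw [show 4 * n + 2 = 2 * (2 * n + 1) by ring, h.he]

theorem r43 (h : RS r) (n : ℕ) : r (4 * n + 3) = - r (2 * n + 1) := by
  rw [show 4 * n + 3 = 2 * (2 * n + 1) + 1 by ring, h.ho (2 * n + 1), pow_succ, pow_mul]; simp

theorem pm (h : RS r) (n : ℕ) : r n = 1 ∨ r n = -1 := by
  induction n using Nat.strong_induction_on with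
  | _ n ih =>
    rcases Nat.even_or_odd' n with ⟨m, rfl | rfl⟩
    · rcases Nat.eq_zero_or_pos m with rfl | hm
      · left; simpa using h.h0
      · rw [h.he]; exact ih m (by omega)
    · rw [h.ho]
      rcases neg_one_pow_eq_or ℤ m with e | e <;> rcases ih m (by omega) with e' | e' <;>
        simp [e, e']

/-- `t n = r (2n+1)`. -/
theorem t4 (h : RS r) (n : ℕ) : r (2 * (4 * n) + 1) = r n := by
  rw [show 2 * (4 * n) + 1 = 4 * (2 * n) + 1 by ring, h.r41, h.he]

theorem t41 (h : RS r) (n : ℕ) : r (2 * (4 * n + 1) + 1) = - r n := by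
  rw [show 2 * (4 * n + 1) + 1 = 4 * (2 * n) + 3 by ring, h.r43,
    show 2 * (2 * n) + 1 = 4 * n + 1 by ring, h.r41]

theorem t42 (h : RS r) (n : ℕ) : r (2 * (4 * n + 2) + 1) = r (2 * n + 1) := by
  rw [show 2 * (4 * n + 2) + 1 = 4 * (2 * n + 1) + 1 by ring, h.r41]

theorem t43 (h : RS r) (n : ℕ) : r (2 * (4 * n + 3) + 1) = r (2 * n + 1) := by
  rw [show 2 * (4 * n + 3) + 1 = 4 * (2 * n + 1) + 3 by ring, h.r43,
    show 2 * (2 * n + 1) + 1 = 4 * n + 3 by ring, h.r43]; simp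

theorem S4 (h : RS r) (n : ℕ) : preS r (4 * n) = 2 * preS r n := by
  induction n with
  | zero => simp [preS]
  | succ n ih =>
    rw [show 4 * (n + 1) = 4 * n + 3 + 1 by ring, preS_succ, preS_succ r (4 * n + 2),
      preS_succ r (4 * n + 1), preS_succ r (4 * n), preS_succ, ih, h.r4, h.r41, h.r42, h.r43]
    ring

theorem S41 (h : RS r) (n : ℕ) : preS r (4 * n + 1) = 2 * preS r n + r n := by
  rw [preS_succ, h.S4, h.r4]

theorem S42 (h : RS r) (n : ℕ) : preS r (4 * n + 2) = 2 * preS r n + 2 * r n := by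
  rw [preS_succ r (4 * n + 1), h.S41, h.r41]; ring

theorem S43 (h : RS r) (n : ℕ) :
    preS r (4 * n + 3) = 2 * preS r n + 2 * r n + r (2 * n + 1) := by
  rw [preS_succ r (4 * n + 2), h.S42, h.r42]

theorem S1 (h : RS r) (n : ℕ) : |preS r (n + 1) - preS r n| ≤ 1 := by
  rw [preS_succ]; rcases h.pm n with e | e <;> simp [e]

theorem S4near (h : RS r) (n p : ℕ) (hp : p < 4) :
    |preS r (4 * n + p) - 2 * preS r n| ≤ 3 := by
  have e1 := h.S4 n
  have e2 := h.S41 n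
  have e3 := h.S42 n
  have e4 := h.S43 n
  rw [abs_le]
  interval_cases p <;> rcases h.pm n with e | e <;> rcases h.pm (2 * n + 1) with e' | e' <;>
    (try simp only [add_zero]) <;> constructor <;> omega

theorem Ssmall (h : RS r) (i n : ℕ) : |preS r (i + n) - preS r i| ≤ n := by
  induction n with
  | zero => simp
  | succ n ih =>
    have := h.S1 (i + n)
    rw [← add_assoc]
    rw [abs_le] at *
    push_cast
    constructor <;> omega

/-- The square-root bound. -/
theorem sq_bound (h : RS r) (n : ℕ) (hn : 1 ≤ n) (i : ℕ) :
    (|preS r (i + n) - preS r i| + 8) ^ 2 ≤ 121 * n := by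
  induction n using Nat.strong_induction_on generalizing i with
  | _ n ih =>
    by_cases h4 : n < 4
    · have := h.Ssmall i n
      have h0 := abs_nonneg (preS r (i + n) - preS r i)
      interval_cases n <;> push_cast at * <;> nlinarith
    · obtain ⟨m, k, hk, rfl⟩ : ∃ m k, k < 4 ∧ n = 4 * m + k :=
        ⟨n / 4, n % 4, by omega, by omega⟩
      obtain ⟨a, p, hp, rfl⟩ : ∃ m k, k < 4 ∧ i = 4 * m + k :=
        ⟨i / 4, i % 4, by omega, by omega⟩
      have I := ih m (by omega) (by omega) a
      have key : |preS r (4 * a + p + (4 * m + k)) - preS r (4 * a + p)|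
          ≤ 2 * |preS r (a + m) - preS r a| + 8 := by
        have e1 := h.S4near a p hp
        have e3 := h.S1 (a + m)
        by_cases hc : p + k < 4
        · have e2 := h.S4near (a + m) (p + k) hc
          rw [show 4 * a + p + (4 * m + k) = 4 * (a + m) + (p + k) by ring]
          rw [abs_le] at *
          rcases abs_cases (preS r (a + m) - preS r a) with e | e <;> constructor <;> omega
        · have e2 := h.S4near (a + m + 1) (p + k - 4) (by omega)
          rw [show 4 * a + p + (4 * m + k) = 4 * (a + m + 1) + (p + k - 4) by omega]
          rw [abs_le] at *
          rcases abs_cases (preS r (a + m) - preS r a) with e | e <;> constructor <;> omega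
      have h0 := abs_nonneg (preS r (4 * a + p + (4 * m + k)) - preS r (4 * a + p))
      push_cast
      nlinarith

theorem parity (h : RS r) (i n : ℕ) : (preS r (i + n) - preS r i - n) % 2 = 0 := by
  induction n with
  | zero => simp
  | succ n ih =>
    rw [← add_assoc, preS_succ]
    push_cast
    rcases h.pm (i + n) with e | e <;> omega

end RS

/-- Abstract form of the maximality hypothesis. -/
structure MaxS (r : ℕ → ℤ) (M : ℕ → ℤ) : Prop where
  ub : ∀ n i, preS r (i + n) - preS r i ≤ M n
  att : ∀ n, ∃ i, preS r (i + n) - preS r i = M n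

namespace MaxS

variable {r M : ℕ → ℤ}

theorem step (h : RS r) (hM : MaxS r M) (n : ℕ) : M (n + 1) = M n + 1 ∨ M (n + 1) = M n - 1 := by
  obtain ⟨i, hi⟩ := hM.att n
  obtain ⟨j, hj⟩ := hM.att (n + 1)
  have a1 := hM.ub (n + 1) i
  have a2 := hM.ub n j
  have p1 := h.parity i n
  have p2 := h.parity j (n + 1)
  rw [← add_assoc, preS_succ] at a1 hj p2
  push_cast at p2
  rcases h.pm (i + n) with e | e <;> rcases h.pm (j + n) with e' | e' <;> omega


theorem bd (h : RS r) (n : ℕ) : -1 ≤ r n ∧ r n ≤ 1 := by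
  rcases h.pm n with e | e <;> omega

/-- Upper bounds in the recursion. -/
theorem upper (h : RS r) (hM : MaxS r M) (n k : ℕ) (hk : k < 4) :
    M (4 * n + k) ≤ if k = 0 then 2 * M n + 2 else if k = 1 then 2 * M n + 1 else
      if k = 2 then M n + M (n + 1) + 1 else 2 * M (n + 1) + 1 := by
  have st := step h hM n
  obtain ⟨i, hi⟩ := hM.att (4 * n + k)
  rw [← hi]
  obtain ⟨a, p, hp, rfl⟩ : ∃ m k, k < 4 ∧ i = 4 * m + k :=
    ⟨i / 4, i % 4, by omega, by omega⟩
  have u1 := hM.ub n a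
  have u2 := hM.ub n (a + 1)
  have u3 := hM.ub (n + 1) a
  have u4 := hM.ub (n + 1) (a + 1)
  rw [show a + 1 + n = a + n + 1 by ring, preS_succ r a, preS_succ r (a + n)] at u2
  rw [← add_assoc, preS_succ r (a + n)] at u3
  rw [show a + 1 + (n + 1) = a + n + 1 + 1 by ring, preS_succ r (a + n + 1),
    preS_succ r (a + n), preS_succ r a] at u4
  have b1 := bd h a
  have b2 := bd h (a + n)
  have b3 := bd h (a + n + 1)
  have b4 := bd h (2 * a + 1)
  have b5 := bd h (2 * (a + n) + 1)
  have s0 := h.S4 a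
  have s1 := h.S41 a
  have s2 := h.S42 a
  have s3 := h.S43 a
  have S0 := h.S4 (a + n)
  have S1 := h.S41 (a + n)
  have S2 := h.S42 (a + n)
  have S3 := h.S43 (a + n)
  have T0 := h.S4 (a + n + 1)
  have T1 := h.S41 (a + n + 1)
  have T2 := h.S42 (a + n + 1)
  rw [preS_succ r (a + n)] at T0 T1 T2
  have hq : 4 * a + p + (4 * n + k) = 4 * (a + n) + (p + k) := by ring
  rw [hq]
  clear hq hi
  have c4 : 4 * (a + n) + 4 = 4 * (a + n + 1) := by ring
  have c5 : 4 * (a + n) + 5 = 4 * (a + n + 1) + 1 := by ring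
  have c6 : 4 * (a + n) + 6 = 4 * (a + n + 1) + 2 := by ring
  rw [← c4] at T0
  rw [← c5] at T1
  rw [← c6] at T2
  interval_cases k <;> interval_cases p <;>
    simp only [add_zero, zero_add, Nat.reduceAdd, if_true, if_false, one_ne_zero,
      OfNat.ofNat_ne_zero, OfNat.ofNat_ne_one, Nat.reduceEqDiff] <;> omega

/-- A maximal window with prescribed boundary behaviour. -/
def P (r M : ℕ → ℤ) (n : ℕ) : Prop :=
  ∃ i, preS r (i + n + 1) - preS r (i + 1) = M n ∧ r (2 * i + 1) = -1 ∧ r (2 * (i + n) + 1) = 1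

theorem P0 (h : RS r) (hM : MaxS r M) {n : ℕ} (hP : P r M n) :
    M (4 * n) = 2 * M n + 2 ∧ P r M (4 * n) := by
  obtain ⟨i, h1, h2, h3⟩ := hP
  have up := upper h hM n 0 (by omega)
  simp only [add_zero, if_true] at up
  have lo := hM.ub (4 * n) (4 * i + 3)
  have e : preS r (4 * i + 3 + 4 * n) - preS r (4 * i + 3) = 2 * M n + 2 := by
    rw [show 4 * i + 3 + 4 * n = 4 * (i + n) + 3 by ring, h.S43, h.S43, h2, h3, ← h1,
      preS_succ, preS_succ]
    ring
  have eM : M (4 * n) = 2 * M n + 2 := by omega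
  refine ⟨eM, 4 * i + 2, ?_, ?_, ?_⟩
  · rw [eM, ← e]; congr 2; ring
  · rw [h.t42, h2]
  · rw [show 4 * i + 2 + 4 * n = 4 * (i + n) + 2 by ring, h.t42, h3]

theorem P1 (h : RS r) (hM : MaxS r M) {n : ℕ} (hP : P r M n) :
    M (4 * n + 1) = 2 * M n + 1 ∧ P r M (4 * n + 1) := by
  obtain ⟨i, h1, h2, h3⟩ := hP
  have up := upper h hM n 1 (by omega)
  simp only [one_ne_zero, if_false, if_true] at up
  have lo := hM.ub (4 * n + 1) (4 * i + 3)
  have e : preS r (4 * i + 3 + (4 * n + 1)) - preS r (4 * i + 3) = 2 * M n + 1 := by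
    rw [show 4 * i + 3 + (4 * n + 1) = 4 * (i + n + 1) by ring, h.S43, h.S4, h2, ← h1,
      preS_succ, preS_succ]
    ring
  have eM : M (4 * n + 1) = 2 * M n + 1 := by omega
  refine ⟨eM, 4 * i + 2, ?_, ?_, ?_⟩
  · rw [eM, ← e]; congr 2; ring
  · rw [h.t42, h2]
  · rw [show 4 * i + 2 + (4 * n + 1) = 4 * (i + n) + 3 by ring, h.t43, h3]

theorem P3 (h : RS r) (hM : MaxS r M) {n : ℕ} (hP : P r M (n + 1)) :
    M (4 * n + 3) = 2 * M (n + 1) + 1 ∧ P r M (4 * n + 3) := by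
  obtain ⟨i, h1, h2, h3⟩ := hP
  have up := upper h hM n 3 (by omega)
  norm_num at up
  have lo := hM.ub (4 * n + 3) (4 * (i + 1))
  have e : preS r (4 * (i + 1) + (4 * n + 3)) - preS r (4 * (i + 1)) = 2 * M (n + 1) + 1 := by
    rw [show 4 * (i + 1) + (4 * n + 3) = 4 * (i + (n + 1)) + 3 by ring, h.S43, h.S4, h3, ← h1,
      preS_succ r (i + (n + 1))]
    ring
  have eM : M (4 * n + 3) = 2 * M (n + 1) + 1 := by omega
  refine ⟨eM, 4 * i + 3, ?_, ?_, ?_⟩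
  · rw [eM, ← e]; congr 2; ring
  · rw [h.t43, h2]
  · rw [show 4 * i + 3 + (4 * n + 3) = 4 * (i + (n + 1)) + 2 by ring, h.t42, h3]

theorem P2 (h : RS r) (hM : MaxS r M) {n : ℕ} (hP : P r M n) (hP' : P r M (n + 1)) :
    M (4 * n + 2) = M n + M (n + 1) + 1 ∧ P r M (4 * n + 2) := by
  have up := upper h hM n 2 (by omega)
  norm_num at up
  rcases step h hM n with st | st
  · obtain ⟨i, h1, h2, h3⟩ := hP'
    have lo := hM.ub (4 * n + 2) (4 * i + 3)
    have hj : r (i + n + 1) = 1 := by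
      have := hM.ub n (i + 1)
      rw [show i + (n + 1) + 1 = i + n + 1 + 1 by ring, preS_succ] at h1
      rw [show i + 1 + n = i + n + 1 by ring] at this
      rcases h.pm (i + n + 1) with e | e <;> omega
    have e : preS r (4 * i + 3 + (4 * n + 2)) - preS r (4 * i + 3) = M n + M (n + 1) + 1 := by
      rw [show i + (n + 1) + 1 = i + n + 1 + 1 by ring, preS_succ, preS_succ r i, hj] at h1
      rw [show 4 * i + 3 + (4 * n + 2) = 4 * (i + n + 1) + 1 by ring, h.S43, h.S41, h2, hj]
      omega
    have eM : M (4 * n + 2) = M n + M (n + 1) + 1 := by omega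
    refine ⟨eM, 4 * i + 2, ?_, ?_, ?_⟩
    · rw [eM, ← e]; congr 2; ring
    · rw [h.t42, h2]
    · rw [show 4 * i + 2 + (4 * n + 2) = 4 * (i + n + 1) by ring, h.t4, hj]
  · obtain ⟨i, h1, h2, h3⟩ := hP
    have lo := hM.ub (4 * n + 2) (4 * i + 1)
    have hj : r i = -1 := by
      have := hM.ub (n + 1) i
      rw [preS_succ r i] at h1
      rw [← add_assoc] at this
      rcases h.pm i with e | e <;> omega
    have e : preS r (4 * i + 1 + (4 * n + 2)) - preS r (4 * i + 1) = M n + M (n + 1) + 1 := by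
      rw [preS_succ, preS_succ r i, hj] at h1
      rw [show 4 * i + 1 + (4 * n + 2) = 4 * (i + n) + 3 by ring, h.S43, h.S41, h3, hj]
      omega
    have eM : M (4 * n + 2) = M n + M (n + 1) + 1 := by omega
    refine ⟨eM, 4 * i, ?_, ?_, ?_⟩
    · rw [eM, ← e]; congr 2; ring
    · rw [h.t4, hj]
    · rw [show 4 * i + (4 * n + 2) = 4 * (i + n) + 2 by ring, h.t42, h3]

theorem small (h : RS r) (hM : MaxS r M) :
    M 0 = 0 ∧ M 1 = 1 ∧ M 2 = 2 ∧ M 3 = 3 ∧ P r M 1 ∧ P r M 2 ∧ P r M 3 := by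
  have r0 := h.h0
  have r1 : r 1 = 1 := by simpa [r0] using h.r41 0
  have r2 : r 2 = 1 := by simpa [r1] using h.r42 0
  have r3 : r 3 = -1 := by simpa [r1] using h.r43 0
  have r5 : r 5 = 1 := by simpa [r1] using h.r41 1
  have r7 : r 7 = 1 := by simpa [r3] using h.r43 1
  have r8 : r 8 = 1 := by simpa [r2] using h.r4 2
  have r9 : r 9 = 1 := by simpa [r2] using h.r41 2
  have r10 : r 10 = 1 := by simpa [r5] using h.r42 2
  have r13 : r 13 = -1 := by simpa [r3] using h.r41 3
  have r15 : r 15 = -1 := by simpa [r7] using h.r43 3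
  have r17 : r 17 = 1 := by simpa [r8, h.r4 1, r1, h.r41 4] using h.r41 4
  have r21 : r 21 = 1 := by simpa [r5] using h.r41 5
  have ubd : ∀ n, M n ≤ n := fun n => by
    obtain ⟨i, hi⟩ := hM.att n
    rw [← hi]; exact (abs_le.1 (h.Ssmall i n)).2
  have m0 : M 0 = 0 := by
    obtain ⟨i, hi⟩ := hM.att 0
    simpa using hi.symm
  have m1 : preS r 3 - preS r 2 = 1 := by rw [preS_succ, r2]; ring
  have m2 : preS r 9 - preS r 7 = 2 := by rw [preS_succ, preS_succ, r7, r8]; ring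
  have m3 : preS r 11 - preS r 8 = 3 := by
    rw [preS_succ, preS_succ, preS_succ, r8, r9, r10]; ring
  have M1 : M 1 = 1 := by have := hM.ub 1 2; have := ubd 1; push_cast at *; omega
  have M2 : M 2 = 2 := by have := hM.ub 2 7; have := ubd 2; push_cast at *; omega
  have M3 : M 3 = 3 := by have := hM.ub 3 8; have := ubd 3; push_cast at *; omega
  refine ⟨m0, M1, M2, M3, ⟨1, ?_, ?_, ?_⟩, ⟨6, ?_, ?_, ?_⟩, ⟨7, ?_, ?_, ?_⟩⟩ <;>
    norm_num <;> omega

theorem allP (h : RS r) (hM : MaxS r M) (n : ℕ) (hn : 1 ≤ n) : P r M n := by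
  obtain ⟨-, -, -, -, p1, p2, p3⟩ := small h hM
  induction n using Nat.strong_induction_on with
  | _ n ih =>
    by_cases h4 : n < 4
    · interval_cases n <;> assumption
    · obtain ⟨m, k, hk, rfl⟩ : ∃ m k, k < 4 ∧ n = 4 * m + k :=
        ⟨n / 4, n % 4, by omega, by omega⟩
      have hm := ih m (by omega) (by omega)
      interval_cases k
      · exact (P0 h hM hm).2
      · exact (P1 h hM hm).2
      · exact (P2 h hM hm (ih (m + 1) (by omega) (by omega))).2
      · exact (P3 h hM (ih (m + 1) (by omega) (by omega))).2

/-- Hölder bound for `M`. -/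
theorem holder (h : RS r) (hM : MaxS r M) (n k : ℕ) : (M (n + k) - M n) ^ 2 ≤ 121 * k := by
  rcases Nat.eq_zero_or_pos k with rfl | hk
  · simp
  obtain ⟨i, hi⟩ := hM.att n
  obtain ⟨j, hj⟩ := hM.att (n + k)
  have a1 := hM.ub (n + k) i
  have a2 := hM.ub n j
  have b1 := h.sq_bound k hk (i + n)
  have b2 := h.sq_bound k hk (j + n)
  rw [← add_assoc] at a1 hj
  set A := preS r (i + n + k) - preS r (i + n) with hA
  set B := preS r (j + n + k) - preS r (j + n) with hB
  have c1 := neg_abs_le A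
  have c2 := le_abs_self B
  have l1 : -|A| ≤ M (n + k) - M n := by omega
  have l2 : M (n + k) - M n ≤ |B| := by omega
  have := abs_nonneg A
  have := abs_nonneg B
  rcases le_total 0 (M (n + k) - M n) with q | q <;> nlinarith

/-- The basic recursion: one step of the 4-adic expansion. -/
theorem recur (h : RS r) (hM : MaxS r M) (n k : ℕ) (hk : k < 4) :
    M (4 * n + k) + 1 = 2 * (M n + 1) +
      dcoef k * (if 4 * n + k = 0 then -1 else M (4 * n + k) - M (4 * n + k - 1)) := by
  obtain ⟨m0, m1, m2, m3, -⟩ := small h hM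
  rcases Nat.eq_zero_or_pos n with rfl | hn
  · interval_cases k <;> simp [dcoef, m0, m1, m2, m3]
  obtain ⟨n, rfl⟩ : ∃ m, n = m + 1 := ⟨n - 1, by omega⟩
  have q0 := (P0 h hM (allP h hM (n + 1) hn)).1
  have q1 := (P1 h hM (allP h hM (n + 1) hn)).1
  have q2 := (P2 h hM (allP h hM (n + 1) hn) (allP h hM (n + 2) (by omega))).1
  have q3 := (P3 h hM (n := n + 1) (allP h hM (n + 2) (by omega))).1
  have qm := (P3 h hM (allP h hM (n + 1) hn)).1
  rw [if_neg (by omega)]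
  interval_cases k
  · rw [show 4 * (n + 1) + 0 - 1 = 4 * n + 3 by omega]; simp [dcoef]; omega
  · simp [dcoef]; omega
  · rw [show 4 * (n + 1) + 2 - 1 = 4 * (n + 1) + 1 by omega]; simp [dcoef]; omega
  · rw [show 4 * (n + 1) + 3 - 1 = 4 * (n + 1) + 2 by omega]; simp [dcoef]; omega

end MaxS

/-- One step of the expansion for the real number `x`. -/
theorem afun_term {r M : ℕ → ℤ} (h : RS r) (hM : MaxS r M) (x : ℝ) (hx : 0 < x) (J : ℕ) :
    M (⌊(4 : ℝ) ^ (J + 1) * x⌋).toNat + 1 = 2 * (M (⌊(4 : ℝ) ^ J * x⌋).toNat + 1) +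
      dcoef (digit x (J + 1)) * acoef M x (J + 1) := by
  obtain ⟨n, hn⟩ : ∃ n : ℕ, ⌊(4 : ℝ) ^ J * x⌋ = n :=
    Int.eq_ofNat_of_zero_le (Int.floor_nonneg.2 (by positivity))
  have hn' := Int.floor_eq_iff.1 hn
  push_cast at hn'
  have e4 : (4 : ℝ) ^ (J + 1) * x = 4 * ((4 : ℝ) ^ J * x) := by ring
  obtain ⟨k, hk, hF⟩ : ∃ k : ℕ, k < 4 ∧ ⌊(4 : ℝ) ^ (J + 1) * x⌋ = ((4 * n + k : ℕ) : ℤ) := by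
    have l1 : (4 * n : ℤ) ≤ ⌊(4 : ℝ) ^ (J + 1) * x⌋ := by
      rw [Int.le_floor]; push_cast; linarith
    have l2 : ⌊(4 : ℝ) ^ (J + 1) * x⌋ < (4 * n + 4 : ℤ) := by
      rw [Int.floor_lt]; push_cast; linarith
    refine ⟨(⌊(4 : ℝ) ^ (J + 1) * x⌋ - 4 * n).toNat, by omega, by omega⟩
  have hd : digit x (J + 1) = k := by
    simp only [digit, Nat.add_sub_cancel, hF, hn]; push_cast; ring
  have ha : acoef M x (J + 1) =
      if 4 * n + k = 0 then -1 else M (4 * n + k) - M (4 * n + k - 1) := by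
    have hi : (4 : ℝ) ^ (J + 1) * x < 1 ↔ 4 * n + k = 0 := by
      have : (4 : ℝ) ^ (J + 1) * x < ((1 : ℤ) : ℝ) ↔ _ := Int.floor_lt.symm
      rw [hF] at this
      rw [Int.cast_one] at this
      rw [this]; omega
    simp only [acoef, hi, hF, Int.toNat_natCast]
  rw [hd, ha, hF, hn, Int.toNat_natCast, Int.toNat_natCast]
  exact MaxS.recur h hM n k hk

theorem afun_partial {r M : ℕ → ℤ} (h : RS r) (hM : MaxS r M) (x : ℝ) (hx : x ∈ Set.Ioo (0 : ℝ) 1)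
    (J : ℕ) :
    ∑ j ∈ Finset.range J, ((dcoef (digit x (j + 1)) * acoef M x (j + 1) : ℤ) : ℝ) / 2 ^ (j + 1)
      = ((M (⌊(4 : ℝ) ^ J * x⌋).toNat : ℝ) + 1) / 2 ^ J - 1 := by
  induction J with
  | zero =>
    have : ⌊x⌋ = 0 := Int.floor_eq_zero_iff.2 ⟨hx.1.le, hx.2⟩
    simp [this, (MaxS.small h hM).1]
  | succ J ih =>
    rw [Finset.sum_range_succ, ih]
    have := afun_term h hM x hx.1 J
    have e : (M (⌊(4 : ℝ) ^ (J + 1) * x⌋).toNat : ℝ) + 1 =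
      2 * ((M (⌊(4 : ℝ) ^ J * x⌋).toNat : ℝ) + 1) +
      ((dcoef (digit x (J + 1)) * acoef M x (J + 1) : ℤ) : ℝ) := by exact_mod_cast this
    rw [e, pow_succ]
    field_simp
    ring

theorem afun_summable {r M : ℕ → ℤ} (h : RS r) (hM : MaxS r M) (x : ℝ) :
    Summable fun j : ℕ =>
      ((dcoef (digit x (j + 1)) * acoef M x (j + 1) : ℤ) : ℝ) / 2 ^ (j + 1) := by
  refine Summable.of_norm_bounded (g := fun j : ℕ => 2 * ((1 : ℝ) / 2) ^ j)
    ((summable_geometric_of_lt_one (by norm_num) (by norm_num)).mul_left _) fun j => ?_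
  have hd : |dcoef (digit x (j + 1))| ≤ 2 := by
    unfold dcoef; split_ifs <;> norm_num
  have ha : |acoef M x (j + 1)| ≤ 1 := by
    unfold acoef
    split_ifs with hc
    · norm_num
    · generalize (⌊(4 : ℝ) ^ (j + 1) * x⌋).toNat = N
      rcases N with _ | N
      · simp
      · rcases MaxS.step h hM N with e | e <;> simp [e]
  have hz : |dcoef (digit x (j + 1)) * acoef M x (j + 1)| ≤ 2 := by
    rw [abs_mul]
    nlinarith [abs_nonneg (dcoef (digit x (j + 1))), abs_nonneg (acoef M x (j + 1))]
  have hz' : |((dcoef (digit x (j + 1)) * acoef M x (j + 1) : ℤ) : ℝ)| ≤ 2 := by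
    exact_mod_cast hz
  rw [Real.norm_eq_abs, abs_div, abs_of_pos (show (0 : ℝ) < 2 ^ (j + 1) by positivity),
    one_div, inv_pow, ← div_eq_mul_inv]
  gcongr
  · norm_num
  · omega

theorem afun_tendsto {r M : ℕ → ℤ} (h : RS r) (hM : MaxS r M) (x : ℝ)
    (hx : x ∈ Set.Ioo (0 : ℝ) 1) :
    Filter.Tendsto (fun J : ℕ => ((M (⌊(4 : ℝ) ^ J * x⌋).toNat : ℝ) + 1) / 2 ^ J - 1)
      Filter.atTop (nhds (afun M x)) := by
  have := (afun_summable h hM x).hasSum.tendsto_sum_nat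
  simp only [afun_partial h hM x hx] at this
  exact this

theorem holder_abs {r M : ℕ → ℤ} (h : RS r) (hM : MaxS r M) (m n : ℕ) :
    |(M m : ℝ) - M n| ≤ 11 * √|(m : ℝ) - n| := by
  wlog hmn : n ≤ m generalizing m n
  · rw [abs_sub_comm, abs_sub_comm (m : ℝ)]; exact this n m (by omega)
  obtain ⟨k, rfl⟩ := Nat.exists_eq_add_of_le hmn
  have := MaxS.holder h hM n k
  have h2 : ((M (n + k) : ℝ) - M n) ^ 2 ≤ 121 * k := by exact_mod_cast this
  push_cast
  rw [add_sub_cancel_left, Nat.abs_cast]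
  apply abs_le_of_sq_le_sq _ (by positivity)
  rw [mul_pow, Real.sq_sqrt (by positivity)]
  linarith

/-- There exists `c > 0` such that for all
`x, y ∈ (0, 1)`, `|a(x) − a(y)| ≤ c·|x − y|^(1/2)`: the function `a` is
Hölder continuous of exponent `1/2` on `(0, 1)`. -/
theorem afun_holder_half
    (r : ℕ → ℤ) (hr0 : r 0 = 1)
    (hre : ∀ n, r (2 * n) = r n)
    (hro : ∀ n, r (2 * n + 1) = (-1) ^ n * r n)
    (M : ℕ → ℤ)
    (hM : ∀ n, IsGreatest (Set.range fun i => pSum r i n) (M n)) :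
    ∃ c : ℝ, 0 < c ∧ ∀ x ∈ Set.Ioo (0 : ℝ) 1, ∀ y ∈ Set.Ioo (0 : ℝ) 1,
      |afun M x - afun M y| ≤ c * |x - y| ^ ((1 : ℝ) / 2) := by
  have h : RS r := ⟨hr0, hre, hro⟩
  have hM' : MaxS r M := by
    refine ⟨fun n i => ?_, fun n => ?_⟩
    · rw [← pSum_eq]; exact (hM n).2 ⟨i, rfl⟩
    · obtain ⟨i, hi⟩ := (hM n).1
      exact ⟨i, by rw [← pSum_eq]; exact hi⟩
  refine ⟨11, by norm_num, fun x hx y hy => ?_⟩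
  rw [← Real.sqrt_eq_rpow]
  have tl := ((afun_tendsto h hM' x hx).sub (afun_tendsto h hM' y hy)).abs
  have tr : Filter.Tendsto (fun J : ℕ => 11 * √(|x - y| + ((1 : ℝ) / 4) ^ J)) Filter.atTop
      (nhds (11 * √|x - y|)) := by
    have := tendsto_pow_atTop_nhds_zero_of_lt_one (r := (1 : ℝ) / 4) (by norm_num) (by norm_num)
    have := ((this.const_add |x - y|).sqrt).const_mul 11
    simpa using this
  refine le_of_tendsto_of_tendsto' tl tr fun J => ?_
  set m := (⌊(4 : ℝ) ^ J * x⌋).toNat with hm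
  set n := (⌊(4 : ℝ) ^ J * y⌋).toNat with hn
  have fl : ∀ z : ℝ, 0 < z → ((⌊(4 : ℝ) ^ J * z⌋).toNat : ℝ) ≤ (4 : ℝ) ^ J * z ∧
      (4 : ℝ) ^ J * z < ((⌊(4 : ℝ) ^ J * z⌋).toNat : ℝ) + 1 := by
    intro z hz
    have h0 : 0 ≤ (4 : ℝ) ^ J * z := by positivity
    rw [Int.floor_toNat]
    exact ⟨Nat.floor_le h0, Nat.lt_floor_add_one _⟩
  obtain ⟨x1, x2⟩ := fl x hx.1
  obtain ⟨y1, y2⟩ := fl y hy.1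
  rw [← hm] at x1 x2
  rw [← hn] at y1 y2
  have p4 : (0 : ℝ) < 4 ^ J := by positivity
  have hmn : |(m : ℝ) - n| ≤ 4 ^ J * (|x - y| + (1 / 4) ^ J) := by
    have e : (4 : ℝ) ^ J * (|x - y| + (1 / 4) ^ J) = 4 ^ J * |x - y| + 1 := by
      rw [mul_add, ← mul_pow]; norm_num
    rw [e, abs_le]
    have := mul_le_mul_of_nonneg_left (le_abs_self (x - y)) p4.le
    have := mul_le_mul_of_nonneg_left (neg_abs_le (x - y)) p4.le
    constructor <;> linarith
  have e : ((M m : ℝ) + 1) / 2 ^ J - 1 - (((M n : ℝ) + 1) / 2 ^ J - 1) = (M m - M n) / 2 ^ J := by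
    ring
  have s4 : √((4 : ℝ) ^ J) = 2 ^ J := by
    rw [show (4 : ℝ) ^ J = (2 ^ J) ^ 2 by rw [← pow_mul, mul_comm, pow_mul]; norm_num,
      Real.sqrt_sq (by positivity)]
  rw [e, abs_div, abs_of_pos (show (0 : ℝ) < 2 ^ J by positivity), div_le_iff₀ (by positivity)]
  calc |(M m : ℝ) - M n| ≤ 11 * √|(m : ℝ) - n| := holder_abs h hM' m n
    _ ≤ 11 * √(4 ^ J * (|x - y| + (1 / 4) ^ J)) := by gcongr
    _ = 11 * √(|x - y| + (1 / 4) ^ J) * 2 ^ J := by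
      rw [Real.sqrt_mul p4.le, s4]; ring
end

section
/- For any real numbers 0 < α < β, the graph F = {(x, λ(x)) : α < x < β} ⊆ ℝ² has box dimension 3/2; that is, log N_δ(F)/(−log δ) → 3/2 as δ → 0⁺, where N_δ(F) is the number of δ-mesh squares of ℝ² that intersect F. -/
open Filter

/-- `N_δ(F)`: the number of δ-mesh squares
`[m₁δ, (m₁+1)δ] × [m₂δ, (m₂+1)δ]` (with `m₁, m₂ ∈ ℤ`) of `ℝ²` that
intersect the set `F`. -/
noncomputable def meshCount (F : Set (ℝ × ℝ)) (δ : ℝ) : ℕ :=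
  {p : ℤ × ℤ |
    ((Set.Icc ((p.1 : ℝ) * δ) (((p.1 : ℝ) + 1) * δ) ×ˢ
      Set.Icc ((p.2 : ℝ) * δ) (((p.2 : ℝ) + 1) * δ)) ∩ F).Nonempty}.ncard

/-- Prefix sums and the twisted sequence `t n = (-1)^n r n`, with the relations we need. -/
structure RSData (r t P M : ℕ → ℤ) : Prop where
  rv : ∀ n, r n = 1 ∨ r n = -1
  tv : ∀ n, t n = 1 ∨ t n = -1
  t0 : ∀ q, t (4 * q) = r q
  t1 : ∀ q, t (4 * q + 1) = - r q
  t2 : ∀ q, t (4 * q + 2) = t q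
  t3 : ∀ q, t (4 * q + 3) = t q
  P0 : ∀ q, P (4 * q) = 2 * P q
  P1 : ∀ q, P (4 * q + 1) = 2 * P q + r q
  P2 : ∀ q, P (4 * q + 2) = 2 * P q + 2 * r q
  P3 : ∀ q, P (4 * q + 3) = 2 * P q + 2 * r q + t q
  Ps : ∀ q, P (q + 1) = P q + r q
  Mle : ∀ a b n, b = a + n → P b - P a ≤ M n
  Mex : ∀ n, ∃ a, P (a + n) - P a = M n
  base : P 9 - P 8 = 1 ∧ t 7 = -1 ∧ t 8 = 1

lemma rs_data (r : ℕ → ℤ) (hr0 : r 0 = 1)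
    (hre : ∀ n, r (2 * n) = r n)
    (hro : ∀ n, r (2 * n + 1) = (-1) ^ n * r n)
    (M : ℕ → ℤ)
    (hM : ∀ n, IsGreatest (Set.range fun i => pSum r i n) (M n)) :
    RSData r (fun n => (-1) ^ n * r n) (fun n => ∑ j ∈ Finset.range n, r j) M := by
  have hrv : ∀ n, r n = 1 ∨ r n = -1 := by
    intro n
    induction n using Nat.strong_induction_on with
    | _ n ih =>
      rcases Nat.even_or_odd' n with ⟨k, rfl | rfl⟩
      · rcases Nat.eq_zero_or_pos k with rfl | hk
        · left; simpa using hr0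
        · rw [hre]; exact ih k (by omega)
      · rw [hro]
        rcases ih k (by omega) with h | h <;> rcases neg_one_pow_eq_or ℤ k with h' | h' <;>
          simp [h, h']
  have r4 : ∀ q, r (4 * q) = r q := fun q => by
    rw [show 4 * q = 2 * (2 * q) by ring, hre, hre]
  have r41 : ∀ q, r (4 * q + 1) = r q := fun q => by
    rw [show 4 * q + 1 = 2 * (2 * q) + 1 by ring, hro, hre]; simp [pow_mul]
  have r42 : ∀ q, r (4 * q + 2) = (-1) ^ q * r q := fun q => by
    rw [show 4 * q + 2 = 2 * (2 * q + 1) by ring, hre, hro]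
  have r43 : ∀ q, r (4 * q + 3) = -((-1) ^ q * r q) := fun q => by
    rw [show 4 * q + 3 = 2 * (2 * q + 1) + 1 by ring, hro, hro]; simp [pow_succ, pow_mul]
  have e4 : ∀ q : ℕ, (-1 : ℤ) ^ (4 * q) = 1 := fun q => by
    rw [pow_mul]; norm_num
  have hP0 : ∀ q, ∑ j ∈ Finset.range (4 * q), r j = 2 * ∑ j ∈ Finset.range q, r j := by
    intro q
    induction q with
    | zero => simp
    | succ q ih =>
      rw [show 4 * (q + 1) = 4 * q + 1 + 1 + 1 + 1 by ring]
      simp only [Finset.sum_range_succ, ih]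
      rw [show 4 * q + 1 + 1 = 4 * q + 2 by ring, show 4 * q + 2 + 1 = 4 * q + 3 by ring,
        r4, r41, r42, r43]
      ring
  have hS : ∀ i n, pSum r i n = ∑ j ∈ Finset.range (i + n), r j - ∑ j ∈ Finset.range i, r j := by
    intro i n
    rw [Finset.sum_range_add]; simp [pSum]
  refine ⟨hrv, ?_, ?_, ?_, ?_, ?_, hP0, ?_, ?_, ?_, ?_, ?_, ?_, ?_⟩
  · intro n
    rcases hrv n with h | h <;> rcases neg_one_pow_eq_or ℤ n with h' | h' <;> simp [h, h']
  · intro q; simp only [e4, r4, one_mul]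
  · intro q; simp only [pow_succ, e4, r41]; ring
  · intro q; simp only [pow_succ, e4, r42]; ring
  · intro q; simp only [pow_succ, e4, r43]; ring
  · intro q; simp only [Finset.sum_range_succ, hP0, r4]
  · intro q
    simp only [Finset.sum_range_succ, hP0, r4, r41, show 4 * q + 2 = 4 * q + 1 + 1 by ring]; ring
  · intro q
    rw [show 4 * q + 3 = 4 * q + 1 + 1 + 1 by ring]
    simp only [Finset.sum_range_succ, hP0, r4, r41, r42]; ring
  · intro q; simp only [Finset.sum_range_succ]
  · rintro a b n rfl
    have := (hM n).2 ⟨a, rfl⟩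
    simp only [hS] at this
    exact this
  · intro n
    obtain ⟨a, ha⟩ := (hM n).1
    exact ⟨a, by rw [← ha]; simp only [hS]⟩
  · have r1 : r 1 = 1 := by have := hro 0; simpa [hr0] using this
    have r2 : r 2 = 1 := by have := hre 1; simpa [r1] using this
    have r3 : r 3 = -1 := by have := hro 1; simpa [r1] using this
    have r7 : r 7 = 1 := by have := hro 3; simpa [r3] using this
    have r4' : r 4 = 1 := by have := hre 2; simpa [r2] using this
    have r8 : r 8 = 1 := by have := hre 4; simpa [r4'] using this
    refine ⟨?_, ?_, ?_⟩
    · rw [Finset.sum_range_succ]; simp [r8]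
    · simp [r7]
    · simp [r8]

namespace RSData

variable {r t P M : ℕ → ℤ}

/-- there is a maximizing window with favourable borders -/
def Good (t P M : ℕ → ℤ) (n : ℕ) : Prop :=
  ∃ p, P (p + n + 1) - P (p + 1) = M n ∧ t p = -1 ∧ t (p + n) = 1

lemma cases4 (a : ℕ) : ∃ q, a = 4 * q ∨ a = 4 * q + 1 ∨ a = 4 * q + 2 ∨ a = 4 * q + 3 :=
  ⟨a / 4, by omega⟩

lemma up0 (h : RSData r t P M) (n : ℕ) : M (4 * n) ≤ 2 * M n + 2 := by
  obtain ⟨a, ha⟩ := h.Mex (4 * n)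
  obtain ⟨q, rfl | rfl | rfl | rfl⟩ := cases4 a
  · rw [show 4 * q + 4 * n = 4 * (q + n) by ring] at ha
    have := h.Mle q (q + n) n rfl
    have := h.P0 q
    have := h.P0 (q + n)
    lia
  · rw [show 4 * q + 1 + 4 * n = 4 * (q + n) + 1 by ring] at ha
    have := h.Mle q (q + n) n rfl
    have := h.P1 q
    have := h.P1 (q + n)
    have := h.rv q
    have := h.rv (q + n)
    lia
  · rw [show 4 * q + 2 + 4 * n = 4 * (q + n) + 2 by ring] at ha
    have := h.Mle (q + 1) (q + n + 1) n (by ring)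
    have := h.P2 q
    have := h.P2 (q + n)
    have := h.Ps q
    have := h.Ps (q + n)
    lia
  · rw [show 4 * q + 3 + 4 * n = 4 * (q + n) + 3 by ring] at ha
    have := h.Mle (q + 1) (q + n + 1) n (by ring)
    have := h.P3 q
    have := h.P3 (q + n)
    have := h.Ps q
    have := h.Ps (q + n)
    have := h.tv q
    have := h.tv (q + n)
    lia

lemma up1 (h : RSData r t P M) (n : ℕ) : M (4 * n + 1) ≤ 2 * M n + 1 := by
  obtain ⟨a, ha⟩ := h.Mex (4 * n + 1)
  obtain ⟨q, hq⟩ := cases4 a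
  have := h.Mle q (q + n) n rfl
  have := h.Mle (q + 1) (q + n + 1) n (by ring)
  have := h.Ps q
  have := h.Ps (q + n)
  have := h.rv q
  have := h.rv (q + n)
  have := h.tv q
  have := h.tv (q + n)
  rcases hq with rfl | rfl | rfl | rfl
  · rw [show 4 * q + (4 * n + 1) = 4 * (q + n) + 1 by ring] at ha
    have := h.P0 q
    have := h.P1 (q + n)
    lia
  · rw [show 4 * q + 1 + (4 * n + 1) = 4 * (q + n) + 2 by ring] at ha
    have := h.P1 q
    have := h.P2 (q + n)
    lia
  · rw [show 4 * q + 2 + (4 * n + 1) = 4 * (q + n) + 3 by ring] at ha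
    have := h.P2 q
    have := h.P3 (q + n)
    lia
  · rw [show 4 * q + 3 + (4 * n + 1) = 4 * (q + n + 1) by ring] at ha
    have := h.P3 q
    have := h.P0 (q + n + 1)
    lia

lemma up3 (h : RSData r t P M) (n : ℕ) : M (4 * n + 3) ≤ 2 * M (n + 1) + 1 := by
  obtain ⟨a, ha⟩ := h.Mex (4 * n + 3)
  obtain ⟨q, hq⟩ := cases4 a
  have := h.Mle q (q + n + 1) (n + 1) (by ring)
  have := h.Mle (q + 1) (q + n + 1 + 1) (n + 1) (by ring)
  have := h.Ps q
  have := h.Ps (q + n)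
  have := h.Ps (q + n + 1)
  have := h.rv q
  have := h.rv (q + n)
  have := h.rv (q + n + 1)
  have := h.tv q
  have := h.tv (q + n)
  rcases hq with rfl | rfl | rfl | rfl
  · rw [show 4 * q + (4 * n + 3) = 4 * (q + n) + 3 by ring] at ha
    have := h.P0 q
    have := h.P3 (q + n)
    lia
  · rw [show 4 * q + 1 + (4 * n + 3) = 4 * (q + n + 1) by ring] at ha
    have := h.P1 q
    have := h.P0 (q + n + 1)
    lia
  · rw [show 4 * q + 2 + (4 * n + 3) = 4 * (q + n + 1) + 1 by ring] at ha
    have := h.P2 q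
    have := h.P1 (q + n + 1)
    lia
  · rw [show 4 * q + 3 + (4 * n + 3) = 4 * (q + n + 1) + 2 by ring] at ha
    have := h.P3 q
    have := h.P2 (q + n + 1)
    lia

lemma up (h : RSData r t P M) (n : ℕ) : M (n + 1) ≤ M n + 1 := by
  obtain ⟨a, ha⟩ := h.Mex (n + 1)
  have := h.Mle a (a + n) n rfl
  have := h.Ps (a + n)
  have := h.rv (a + n)
  rw [← add_assoc] at ha
  lia

lemma down (h : RSData r t P M) (n : ℕ) : M n ≤ M (n + 1) + 1 := by
  obtain ⟨a, ha⟩ := h.Mex n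
  have := h.Mle a (a + n + 1) (n + 1) rfl
  have := h.Ps (a + n)
  have := h.rv (a + n)
  lia

lemma parP (h : RSData r t P M) (a n : ℕ) : (2 : ℤ) ∣ P (a + n) - P a - n := by
  induction n with
  | zero => simp
  | succ n ih =>
    have := h.Ps (a + n)
    have := h.rv (a + n)
    rw [← add_assoc]
    push_cast
    lia

lemma par (h : RSData r t P M) (n : ℕ) : (2 : ℤ) ∣ M n - n := by
  obtain ⟨a, ha⟩ := h.Mex n
  have := h.parP a n
  rwa [ha] at this

lemma step (h : RSData r t P M) (n : ℕ) : M (n + 1) = M n + 1 ∨ M (n + 1) = M n - 1 := by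
  have := h.up n
  have := h.down n
  have := h.par n
  have := h.par (n + 1)
  push_cast at this
  lia

lemma up2 (h : RSData r t P M) (n : ℕ) : M (4 * n + 2) ≤ M n + M (n + 1) + 1 := by
  obtain ⟨a, ha⟩ := h.Mex (4 * n + 2)
  obtain ⟨q, hq⟩ := cases4 a
  have := h.Mle q (q + n + 1) (n + 1) (by ring)
  have := h.Mle (q + 1) (q + n + 1 + 1) (n + 1) (by ring)
  have := h.Mle (q + 1) (q + n + 1) n (by ring)
  have := h.up n
  have := h.down n
  have := h.Ps q
  have := h.Ps (q + n)
  have := h.Ps (q + n + 1)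
  have := h.tv q
  have := h.tv (q + n)
  rcases hq with rfl | rfl | rfl | rfl
  · rw [show 4 * q + (4 * n + 2) = 4 * (q + n) + 2 by ring] at ha
    have := h.P0 q
    have := h.P2 (q + n)
    lia
  · rw [show 4 * q + 1 + (4 * n + 2) = 4 * (q + n) + 3 by ring] at ha
    have := h.P1 q
    have := h.P3 (q + n)
    lia
  · rw [show 4 * q + 2 + (4 * n + 2) = 4 * (q + n + 1) by ring] at ha
    have := h.P2 q
    have := h.P0 (q + n + 1)
    lia
  · rw [show 4 * q + 3 + (4 * n + 2) = 4 * (q + n + 1) + 1 by ring] at ha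
    have := h.P3 q
    have := h.P1 (q + n + 1)
    lia

lemma M0 (h : RSData r t P M) : M 0 = 0 := by
  obtain ⟨a, ha⟩ := h.Mex 0
  simpa using ha.symm

/-- constructing a good window, from coordinates -/
lemma mkGood (h : RSData r t P M) (N p b e : ℕ) (v : ℤ) (hb : p + 1 = b) (he : p + N + 1 = e)
    (hv : P e - P b = v) (hup : M N ≤ v) (h1 : t p = -1) (h2 : t (p + N) = 1) :
    Good t P M N ∧ M N = v := by
  have h3 := h.Mle b e N (by omega)
  subst hb he
  exact ⟨⟨p, by lia, h1, h2⟩, by lia⟩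

lemma good0 (h : RSData r t P M) (n : ℕ) (g : Good t P M n) :
    Good t P M (4 * n) ∧ M (4 * n) = 2 * M n + 2 := by
  obtain ⟨p, hp, h1, h2⟩ := g
  have := h.Ps p
  have := h.Ps (p + n)
  have := h.P3 p
  have := h.P3 (p + n)
  refine h.mkGood (4 * n) (4 * p + 2) (4 * p + 3) (4 * (p + n) + 3) _ (by ring) (by ring) ?_
    (h.up0 n) ?_ ?_
  · lia
  · rw [h.t2, h1]
  · rw [show 4 * p + 2 + 4 * n = 4 * (p + n) + 2 by ring, h.t2, h2]

lemma good1 (h : RSData r t P M) (n : ℕ) (g : Good t P M n) : Good t P M (4 * n + 1) := by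
  obtain ⟨p, hp, h1, h2⟩ := g
  have := h.Ps p
  have := h.Ps (p + n)
  have := h.P3 p
  have := h.P0 (p + n + 1)
  refine (h.mkGood (4 * n + 1) (4 * p + 2) (4 * p + 3) (4 * (p + n + 1)) _ (by ring) (by ring) ?_
    (h.up1 n) ?_ ?_).1
  · lia
  · rw [h.t2, h1]
  · rw [show 4 * p + 2 + (4 * n + 1) = 4 * (p + n) + 3 by ring, h.t3, h2]

lemma good3 (h : RSData r t P M) (n : ℕ) (g : Good t P M (n + 1)) : Good t P M (4 * n + 3) := by
  obtain ⟨p, hp, h1, h2⟩ := g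
  have := h.P0 (p + 1)
  have := h.Ps (p + (n + 1))
  have := h.P3 (p + (n + 1))
  refine (h.mkGood (4 * n + 3) (4 * p + 3) (4 * (p + 1)) (4 * (p + (n + 1)) + 3) _ (by ring)
    (by ring) ?_ (h.up3 n) ?_ ?_).1
  · lia
  · rw [h.t3, h1]
  · rw [show 4 * p + 3 + (4 * n + 3) = 4 * (p + (n + 1)) + 2 by ring, h.t2, h2]

lemma good2a (h : RSData r t P M) (n : ℕ) (g : Good t P M (n + 1)) (hs : M (n + 1) = M n + 1) :
    Good t P M (4 * n + 2) := by
  obtain ⟨p, hp, h1, h2⟩ := g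
  have hu := h.up2 n
  have := h.Ps (p + (n + 1))
  have := h.Ps p
  rcases h.rv (p + (n + 1)) with hr | hr
  · have := h.P3 p
    have := h.P1 (p + (n + 1))
    refine (h.mkGood (4 * n + 2) (4 * p + 2) (4 * p + 3) (4 * (p + (n + 1)) + 1) _ (by ring)
      (by ring) rfl ?_ ?_ ?_).1
    · lia
    · rw [h.t2, h1]
    · rw [show 4 * p + 2 + (4 * n + 2) = 4 * (p + (n + 1)) by ring, h.t0, hr]
  · have := h.P0 (p + 1)
    have := h.P2 (p + (n + 1))
    refine (h.mkGood (4 * n + 2) (4 * p + 3) (4 * (p + 1)) (4 * (p + (n + 1)) + 2) _ (by ring)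
      (by ring) rfl ?_ ?_ ?_).1
    · lia
    · rw [h.t3, h1]
    · rw [show 4 * p + 3 + (4 * n + 2) = 4 * (p + (n + 1)) + 1 by ring, h.t1, hr]; rfl

lemma good2b (h : RSData r t P M) (n : ℕ) (g : Good t P M n) (hs : M (n + 1) = M n - 1) :
    Good t P M (4 * n + 2) := by
  obtain ⟨p, hp, h1, h2⟩ := g
  have hu := h.up2 n
  have := h.Ps (p + n)
  have := h.Ps p
  have := h.Mle p (p + n + 1) (n + 1) (by ring)
  have := h.rv p
  have hr : r p = -1 := by lia
  have := h.P1 p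
  have := h.P3 (p + n)
  refine (h.mkGood (4 * n + 2) (4 * p) (4 * p + 1) (4 * (p + n) + 3) _ (by ring)
    (by ring) rfl ?_ ?_ ?_).1
  · lia
  · rw [h.t0, hr]
  · rw [show 4 * p + (4 * n + 2) = 4 * (p + n) + 2 by ring, h.t2, h2]

lemma good (h : RSData r t P M) (n : ℕ) (hn : 1 ≤ n) : Good t P M n := by
  induction n using Nat.strong_induction_on with
  | _ N ih =>
    obtain ⟨n, hq⟩ := cases4 N
    have M1 : M 1 = M 0 + 1 := by
      have := h.up 0
      have := h.Mle 8 9 1 rfl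
      have := h.base.1
      have := h.M0
      simp only [zero_add] at *
      lia
    rcases hq with rfl | rfl | rfl | rfl
    · exact (h.good0 n (ih n (by omega) (by omega))).1
    · rcases Nat.eq_zero_or_pos n with rfl | hn
      · refine ⟨7, ?_, h.base.2.1, h.base.2.2⟩
        have := h.base.1
        have := h.M0
        simp only [mul_zero, zero_add] at *
        norm_num
        lia
      · exact h.good1 n (ih n (by omega) hn)
    · rcases h.step n with hs | hs
      · exact h.good2a n (ih (n + 1) (by omega) (by omega)) hs
      · refine h.good2b n (ih n (by omega) ?_) hs
        rcases Nat.eq_zero_or_pos n with rfl | hn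
        · simp only [zero_add] at hs
          lia
        · exact hn
    · exact h.good3 n (ih (n + 1) (by omega) (by omega))

lemma M4 (h : RSData r t P M) (n : ℕ) (hn : 1 ≤ n) : M (4 * n) = 2 * M n + 2 :=
  (h.good0 n (h.good n hn)).2

lemma M4pow (h : RSData r t P M) (n : ℕ) (hn : 1 ≤ n) (k : ℕ) :
    M (4 ^ k * n) = 2 ^ k * (M n + 2) - 2 := by
  induction k with
  | zero => simp
  | succ k ih =>
    rw [pow_succ', mul_assoc, h.M4 _ (Nat.one_le_iff_ne_zero.2 (by positivity)), ih]
    ring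

lemma Pgrowth (h : RSData r t P M) (N : ℕ) (hN : 1 ≤ N) :
    ∀ a, |(P (a + N) - P a : ℝ)| ≤ 14 * √N - 7 := by
  have key : ∀ a b : ℕ, a ≤ b → |P b - P a| ≤ b - a := by
    intro a b hab
    obtain ⟨c, rfl⟩ := Nat.exists_eq_add_of_le hab
    induction c with
    | zero => simp
    | succ c ih =>
      have := ih (by omega)
      have := h.Ps (a + c)
      have := h.rv (a + c)
      rw [← add_assoc]
      push_cast at *
      rw [abs_le] at *
      lia
  induction N using Nat.strong_induction_on with
  | _ N ih =>
    intro a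
    have hs1 : (1 : ℝ) ≤ √N := by
      rw [Real.one_le_sqrt]; exact_mod_cast hN
    by_cases h6 : N ≤ 7
    · have h1 := key a (a + N) (by omega)
      have h2 : |P (a + N) - P a| ≤ 7 := by push_cast at h1; omega
      have h3 : |(P (a + N) - P a : ℝ)| ≤ 7 := by exact_mod_cast h2
      linarith
    · set q := a / 4 + 1 with hq
      set e := (a + N) / 4 with he
      obtain ⟨m, hm⟩ := Nat.exists_eq_add_of_le (show q ≤ e by omega)
      have h1 := key a (4 * q) (by omega)
      have h2 := key (4 * e) (a + N) (by omega)
      rw [h.P0] at h1 h2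
      have h3 : |P (a + N) - P a - 2 * (P e - P q)| ≤ 7 := by
        rw [abs_le] at *
        push_cast at *
        omega
      have h3' : |(P (a + N) - P a - 2 * (P e - P q) : ℝ)| ≤ 7 := by exact_mod_cast h3
      rcases Nat.eq_zero_or_pos m with rfl | hmpos
      · simp at hm
        rw [hm] at h3'
        simp at h3'
        linarith
      · have h4 := ih m (by omega) hmpos q
        rw [← hm] at h4
        have h5 : 2 * √(m : ℝ) ≤ √N := by
          apply Real.le_sqrt_of_sq_le
          rw [mul_pow, Real.sq_sqrt (by positivity)]
          have : 4 * m ≤ N := by omega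
          have : (4 * m : ℝ) ≤ N := by exact_mod_cast this
          linarith
        rw [abs_le] at *
        constructor <;> linarith

lemma Pgrowth' (h : RSData r t P M) (N a : ℕ) : |(P (a + N) - P a : ℝ)| ≤ 14 * √N := by
  rcases Nat.eq_zero_or_pos N with rfl | hN
  · simp
  · linarith [h.Pgrowth N hN a]

lemma Mdiff (h : RSData r t P M) (n m : ℕ) : |(M (n + m) - M n : ℝ)| ≤ 14 * √m := by
  rw [abs_le]
  constructor
  · obtain ⟨a, ha⟩ := h.Mex n
    have h1 := h.Mle a (a + n + m) (n + m) (by ring)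
    have h2 := h.Pgrowth' m (a + n)
    rw [abs_le] at h2
    have h1' : (P (a + n + m) - P a : ℝ) ≤ M (n + m) := by exact_mod_cast h1
    have ha' : (P (a + n) - P a : ℝ) = M n := by exact_mod_cast ha
    linarith
  · obtain ⟨a, ha⟩ := h.Mex (n + m)
    have h1 := h.Mle a (a + n) n (by ring)
    have h2 := h.Pgrowth' m (a + n)
    rw [← add_assoc] at ha
    rw [abs_le] at h2
    have h1' : (P (a + n) - P a : ℝ) ≤ M n := by exact_mod_cast h1
    have ha' : (P (a + n + m) - P a : ℝ) = M (n + m) := by exact_mod_cast ha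
    linarith

end RSData

/-- the square, as a set of indices -/
lemma mesh_upper (f : ℝ → ℝ) (α β C δ : ℝ) (hαβ : α < β) (hC : 0 ≤ C) (hδ : 0 < δ) (hδ1 : δ ≤ 1)
    (hold : ∀ x y, α < x → x < β → α < y → y < β → |f x - f y| ≤ C * √|x - y|) :
    {p : ℤ × ℤ |
      ((Set.Icc ((p.1 : ℝ) * δ) (((p.1 : ℝ) + 1) * δ) ×ˢ
      Set.Icc ((p.2 : ℝ) * δ) (((p.2 : ℝ) + 1) * δ)) ∩
        {p : ℝ × ℝ | ∃ x : ℝ, α < x ∧ x < β ∧ p = (x, f x)}).Nonempty}.Finite ∧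
    (meshCount {p : ℝ × ℝ | ∃ x : ℝ, α < x ∧ x < β ∧ p = (x, f x)} δ : ℝ) ≤
      (β - α + 3) * (2 * C + 3) / (δ * √δ) := by
  classical
  have hsq : 0 < √δ := Real.sqrt_pos.2 hδ
  have hsq1 : √δ ≤ 1 := by
    rw [← Real.sqrt_one]; exact Real.sqrt_le_sqrt hδ1
  have hss : √δ * √δ = δ := Real.mul_self_sqrt hδ.le
  -- a point in each column
  have hch : ∀ m : ℤ, ∃ v : ℝ, ∀ x, α < x → x < β → (m : ℝ) * δ ≤ x → x ≤ ((m : ℝ) + 1) * δ →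
      |f x - v| ≤ C * √δ := by
    intro m
    by_cases hm : ∃ y, α < y ∧ y < β ∧ (m : ℝ) * δ ≤ y ∧ y ≤ ((m : ℝ) + 1) * δ
    · obtain ⟨y, h1, h2, h3, h4⟩ := hm
      refine ⟨f y, fun x g1 g2 g3 g4 => (hold x y g1 g2 h1 h2).trans ?_⟩
      gcongr
      rw [abs_le]
      constructor <;> linarith
    · exact ⟨0, fun x g1 g2 g3 g4 => absurd ⟨x, g1, g2, g3, g4⟩ hm⟩
  choose v hv using hch
  let S : Finset (ℤ × ℤ) := (Finset.Icc (⌈α / δ - 1⌉) (⌊β / δ⌋)).biUnion fun m =>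
    (Finset.Icc (⌈(v m - C * √δ) / δ - 1⌉) (⌊(v m + C * √δ) / δ⌋)).image fun q => (m, q)
  have hsub : {p : ℤ × ℤ |
      ((Set.Icc ((p.1 : ℝ) * δ) (((p.1 : ℝ) + 1) * δ) ×ˢ
      Set.Icc ((p.2 : ℝ) * δ) (((p.2 : ℝ) + 1) * δ)) ∩
        {p : ℝ × ℝ | ∃ x : ℝ, α < x ∧ x < β ∧ p = (x, f x)}).Nonempty} ⊆ (S : Set (ℤ × ℤ)) := by
    rintro ⟨m, q⟩ ⟨_, ⟨⟨h1, h2⟩, h3, h4⟩, x, hx1, hx2, rfl⟩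
    simp only at h1 h2 h3 h4
    have hb := hv m x hx1 hx2 h1 h2
    rw [abs_le] at hb
    simp only [S, Finset.coe_biUnion, Set.mem_iUnion, Finset.coe_image, Set.mem_image,
      Finset.mem_coe, Finset.mem_Icc, Prod.mk.injEq, exists_prop]
    refine ⟨m, ⟨?_, ?_⟩, q, ⟨?_, ?_⟩, rfl, rfl⟩
    · rw [Int.ceil_le, sub_le_iff_le_add, div_le_iff₀ hδ]; linarith
    · rw [Int.le_floor, le_div_iff₀ hδ]; linarith
    · rw [Int.ceil_le, sub_le_iff_le_add, div_le_iff₀ hδ]; linarith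
    · rw [Int.le_floor, le_div_iff₀ hδ]; linarith
  have hcard : ∀ a b : ℝ, a ≤ b → ((Finset.Icc (⌈a - 1⌉) (⌊b⌋)).card : ℝ) ≤ b - a + 3 := by
    intro a b hab
    rw [Int.card_Icc]
    have h1 : (⌊b⌋ : ℝ) ≤ b := Int.floor_le b
    have h2 : a - 1 ≤ (⌈a - 1⌉ : ℝ) := Int.le_ceil _
    have h3 : ((⌊b⌋ + 1 - ⌈a - 1⌉).toNat : ℝ) = max ((⌊b⌋ + 1 - ⌈a - 1⌉ : ℤ) : ℝ) 0 := by
      have := Int.toNat_eq_max (⌊b⌋ + 1 - ⌈a - 1⌉)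
      exact_mod_cast congrArg (Int.cast (R := ℝ)) this
    rw [h3]
    push_cast
    apply max_le <;> linarith
  refine ⟨S.finite_toSet.subset hsub, ?_⟩
  have h1 : meshCount {p : ℝ × ℝ | ∃ x : ℝ, α < x ∧ x < β ∧ p = (x, f x)} δ ≤ S.card := by
    rw [← Set.ncard_coe_finset]
    exact Set.ncard_le_ncard hsub S.finite_toSet
  have h2 : S.card ≤ (Finset.Icc (⌈α / δ - 1⌉) (⌊β / δ⌋)).card * ⌊(2 * C + 3) / √δ⌋₊ := by
    apply Finset.card_biUnion_le_card_mul
    intro m _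
    refine Finset.card_image_le.trans ?_
    apply Nat.le_floor
    refine (hcard _ _ (by gcongr; nlinarith)).trans ?_
    have e1 : (v m + C * √δ) / δ - (v m - C * √δ) / δ = 2 * C / √δ := by
      rw [← sub_div, div_eq_div_iff hδ.ne' hsq.ne']
      linear_combination (2 * C) * hss
    rw [e1, add_div]
    have : 3 ≤ 3 / √δ := by rw [le_div_iff₀ hsq]; linarith
    linarith
  have h3 := hcard (α / δ) (β / δ) (by gcongr)
  have h4 : β / δ - α / δ + 3 ≤ (β - α + 3) / δ := by
    rw [add_div, sub_div]
    have : 3 ≤ 3 / δ := by rw [le_div_iff₀ hδ]; linarith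
    linarith
  have h5 : (⌊(2 * C + 3) / √δ⌋₊ : ℝ) ≤ (2 * C + 3) / √δ := Nat.floor_le (by positivity)
  calc (meshCount {p : ℝ × ℝ | ∃ x : ℝ, α < x ∧ x < β ∧ p = (x, f x)} δ : ℝ)
      ≤ ((Finset.Icc (⌈α / δ - 1⌉) (⌊β / δ⌋)).card * ⌊(2 * C + 3) / √δ⌋₊ : ℕ) := by
        exact_mod_cast h1.trans h2
    _ ≤ ((β - α + 3) / δ) * ((2 * C + 3) / √δ) := by
        push_cast
        have : 0 ≤ (β - α + 3) / δ := div_nonneg (by linarith) hδ.le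
        gcongr
        linarith
    _ = _ := by rw [div_mul_div_comm]

lemma mesh_lower (f : ℝ → ℝ) (α β c δ : ℝ) (hc : 0 < c) (hδ : 0 < δ)
    (hδ2 : 4 * δ < β - α) (hδ3 : 4 * √δ < c)
    (hcont : ContinuousOn f (Set.Ioo α β))
    (osc : ∀ u, α < u → u + δ < β →
      ∃ x ∈ Set.Icc u (u + δ), ∃ y ∈ Set.Icc u (u + δ), c * √δ ≤ f y - f x)
    (hfin : {p : ℤ × ℤ |
      ((Set.Icc ((p.1 : ℝ) * δ) (((p.1 : ℝ) + 1) * δ) ×ˢ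
      Set.Icc ((p.2 : ℝ) * δ) (((p.2 : ℝ) + 1) * δ)) ∩
        {p : ℝ × ℝ | ∃ x : ℝ, α < x ∧ x < β ∧ p = (x, f x)}).Nonempty}.Finite) :
    (β - α) / 4 * (c / 4) / (δ * √δ) ≤
    (meshCount {p : ℝ × ℝ | ∃ x : ℝ, α < x ∧ x < β ∧ p = (x, f x)} δ : ℝ) := by
  classical
  have hsq : 0 < √δ := Real.sqrt_pos.2 hδ
  have hss : √δ * √δ = δ := Real.mul_self_sqrt hδ.le
  set K := ⌊(β - α) / (2 * δ)⌋₊ with hK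
  set H := ⌊c / (2 * √δ)⌋₊ with hH
  set m0 : ℤ := ⌊α / δ⌋ + 1 with hm0
  have hm1 : α < m0 * δ := by
    have := Int.lt_floor_add_one (α / δ)
    rw [div_lt_iff₀ hδ] at this
    rw [hm0]; push_cast; exact this
  have hm2 : m0 * δ ≤ α + δ := by
    have := Int.floor_le (α / δ)
    rw [le_div_iff₀ hδ] at this
    rw [hm0]; push_cast; linarith
  have hK1 : K * δ ≤ (β - α) / 2 := by
    have : (K : ℝ) ≤ (β - α) / (2 * δ) := Nat.floor_le (div_nonneg (by linarith) (by positivity))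
    rw [le_div_iff₀ (by positivity)] at this
    linarith
  have hH1 : H * δ ≤ c * √δ / 2 := by
    have : (H : ℝ) ≤ c / (2 * √δ) := Nat.floor_le (by positivity)
    rw [le_div_iff₀ (by positivity)] at this
    nlinarith
  have hcol : ∀ i : Fin K, ∃ b : ℤ, ∀ j : Fin H, ∃ z, α < z ∧ z < β ∧
      ((m0 + (i : ℕ) : ℤ) : ℝ) * δ ≤ z ∧ z ≤ (((m0 + (i : ℕ) : ℤ) : ℝ) + 1) * δ ∧
      f z = ((b + (j : ℕ) : ℤ) : ℝ) * δ := by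
    intro i
    have hi : ((i : ℕ) : ℝ) + 1 ≤ K := by exact_mod_cast i.2
    have hi0 : (0 : ℝ) ≤ ((i : ℕ) : ℝ) := by positivity
    have u1 : α < ((m0 + (i : ℕ) : ℤ) : ℝ) * δ := by push_cast; nlinarith
    have u2 : ((m0 + (i : ℕ) : ℤ) : ℝ) * δ + δ < β := by push_cast; nlinarith
    obtain ⟨x, hx, y, hy, hxy⟩ := osc _ u1 u2
    refine ⟨⌊f x / δ⌋ + 1, fun j => ?_⟩
    have hj : ((j : ℕ) : ℝ) + 1 ≤ H := by exact_mod_cast j.2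
    have hj0 : (0 : ℝ) ≤ ((j : ℕ) : ℝ) := by positivity
    have l1 := Int.lt_floor_add_one (f x / δ)
    have l2 := Int.floor_le (f x / δ)
    rw [div_lt_iff₀ hδ] at l1
    rw [le_div_iff₀ hδ] at l2
    have hsub : Set.uIcc x y ⊆ Set.Icc (((m0 + (i : ℕ) : ℤ) : ℝ) * δ)
        (((m0 + (i : ℕ) : ℤ) : ℝ) * δ + δ) := Set.uIcc_subset_Icc hx hy
    have hivt := intermediate_value_uIcc (a := x) (b := y) (f := f)
      (hcont.mono (hsub.trans fun z hz => ⟨by linarith [hz.1], by linarith [hz.2]⟩))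
    have hmem : ((⌊f x / δ⌋ + 1 + (j : ℕ) : ℤ) : ℝ) * δ ∈ Set.uIcc (f x) (f y) := by
      rw [Set.uIcc_of_le (by nlinarith)]
      push_cast
      constructor
      · nlinarith
      · nlinarith
    obtain ⟨z, hz, hfz⟩ := hivt hmem
    have hz' := hsub hz
    exact ⟨z, by linarith [hz'.1], by linarith [hz'.2], hz'.1, by linarith [hz'.2], hfz⟩
  choose b hb using hcol
  let g : Fin K × Fin H → ℤ × ℤ := fun p => (m0 + (p.1 : ℕ), b p.1 + (p.2 : ℕ))
  have hg : Function.Injective g := by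
    rintro ⟨i, j⟩ ⟨i', j'⟩ hij
    simp only [g, Prod.mk.injEq] at hij
    obtain ⟨e1, e2⟩ := hij
    have hi : i = i' := by ext; lia
    subst hi
    have hj : j = j' := by ext; lia
    rw [hj]
  have hrange : Set.range g ⊆ {p : ℤ × ℤ |
      ((Set.Icc ((p.1 : ℝ) * δ) (((p.1 : ℝ) + 1) * δ) ×ˢ
      Set.Icc ((p.2 : ℝ) * δ) (((p.2 : ℝ) + 1) * δ)) ∩
        {p : ℝ × ℝ | ∃ x : ℝ, α < x ∧ x < β ∧ p = (x, f x)}).Nonempty} := by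
    rintro _ ⟨⟨i, j⟩, rfl⟩
    obtain ⟨z, z1, z2, z3, z4, z5⟩ := hb i j
    refine ⟨(z, f z), ⟨⟨z3, z4⟩, ?_⟩, z, z1, z2, rfl⟩
    rw [z5]
    simp only [g]
    constructor <;> nlinarith
  have hcard : K * H ≤ meshCount {p : ℝ × ℝ | ∃ x : ℝ, α < x ∧ x < β ∧ p = (x, f x)} δ := by
    have := Set.ncard_le_ncard hrange hfin
    have e : (Set.range g).ncard = K * H := by
      rw [← Set.image_univ, Set.ncard_image_of_injective _ hg, Set.ncard_univ]
      simp
    rw [e] at this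
    exact this
  have hK2 : (β - α) / 4 / δ ≤ K := by
    have h1 := Nat.lt_floor_add_one ((β - α) / (2 * δ))
    have h2 : 1 ≤ (β - α) / 4 / δ := by rw [le_div_iff₀ hδ]; linarith
    have h3 : (β - α) / (2 * δ) = 2 * ((β - α) / 4 / δ) := by field_simp; ring
    rw [← hK] at h1
    linarith
  have hH2 : c / 4 / √δ ≤ H := by
    have h1 := Nat.lt_floor_add_one (c / (2 * √δ))
    have h2 : 1 ≤ c / 4 / √δ := by rw [le_div_iff₀ hsq]; linarith
    have h3 : c / (2 * √δ) = 2 * (c / 4 / √δ) := by field_simp; ring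
    rw [← hH] at h1
    linarith
  calc (β - α) / 4 * (c / 4) / (δ * √δ) = ((β - α) / 4 / δ) * (c / 4 / √δ) := by
        rw [div_mul_div_comm (_ / 4) δ]
    _ ≤ K * H := by gcongr
    _ ≤ _ := by exact_mod_cast hcard

lemma box_dim (f : ℝ → ℝ) (α β C c δ0 : ℝ) (hαβ : α < β) (hC : 0 ≤ C) (hc : 0 < c) (hδ0 : 0 < δ0)
    (hold : ∀ x y, α < x → x < β → α < y → y < β → |f x - f y| ≤ C * √|x - y|)
    (osc : ∀ δ, 0 < δ → δ < δ0 → ∀ u, α < u → u + δ < β →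
      ∃ x ∈ Set.Icc u (u + δ), ∃ y ∈ Set.Icc u (u + δ), c * √δ ≤ f y - f x) :
    Tendsto
      (fun δ : ℝ =>
        Real.log (meshCount {p : ℝ × ℝ | ∃ x : ℝ, α < x ∧ x < β ∧ p = (x, f x)} δ) /
          (-Real.log δ))
      (nhdsWithin 0 (Set.Ioi 0)) (nhds (3 / 2)) := by
  have hcont : ContinuousOn f (Set.Ioo α β) := by
    intro y hy
    rw [ContinuousWithinAt, tendsto_iff_dist_tendsto_zero]
    have hlim : Tendsto (fun x => C * √|x - y|) (nhdsWithin y (Set.Ioo α β)) (nhds 0) := by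
      have : Continuous (fun x => C * √|x - y|) := by fun_prop
      have := this.tendsto y
      simp only [sub_self, abs_zero, Real.sqrt_zero, mul_zero] at this
      exact this.mono_left nhdsWithin_le_nhds
    refine squeeze_zero' (Eventually.of_forall fun _ => dist_nonneg) ?_ hlim
    filter_upwards [self_mem_nhdsWithin] with x hx
    rw [Real.dist_eq]
    exact hold x y hx.1 hx.2 hy.1 hy.2
  have hlog : Tendsto (fun δ : ℝ => -Real.log δ) (nhdsWithin 0 (Set.Ioi 0)) atTop :=
    tendsto_neg_atBot_atTop.comp Real.tendsto_log_nhdsGT_zero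
  have hb : ∀ a : ℝ, Tendsto (fun δ : ℝ => 3 / 2 + Real.log a / (-Real.log δ))
      (nhdsWithin 0 (Set.Ioi 0)) (nhds (3 / 2)) := by
    intro a
    simpa using (tendsto_const_nhds (x := (3 / 2 : ℝ))).add (hlog.const_div_atTop (Real.log a))
  have hform : ∀ a δ : ℝ, 0 < a → 0 < δ → δ < 1 →
      3 / 2 + Real.log a / (-Real.log δ) = Real.log (a / (δ * √δ)) / (-Real.log δ) := by
    intro a δ ha hδ hδ1
    have hsq : 0 < √δ := Real.sqrt_pos.2 hδ
    have hl : Real.log δ < 0 := Real.log_neg hδ hδ1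
    rw [Real.log_div ha.ne' (by positivity), Real.log_mul hδ.ne' hsq.ne', Real.log_sqrt hδ.le]
    have := hl.ne
    field_simp
    ring
  have ev : ∀ e : ℝ, 0 < e → ∀ᶠ δ in nhdsWithin (0 : ℝ) (Set.Ioi 0), δ < e := fun e he =>
    (eventually_lt_nhds he).filter_mono nhdsWithin_le_nhds
  have hE : ∀ᶠ δ in nhdsWithin (0 : ℝ) (Set.Ioi 0), 0 < δ ∧ δ < 1 ∧
      (β - α) / 4 * (c / 4) / (δ * √δ) ≤
        (meshCount {p : ℝ × ℝ | ∃ x : ℝ, α < x ∧ x < β ∧ p = (x, f x)} δ : ℝ) ∧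
      (meshCount {p : ℝ × ℝ | ∃ x : ℝ, α < x ∧ x < β ∧ p = (x, f x)} δ : ℝ) ≤
        (β - α + 3) * (2 * C + 3) / (δ * √δ) := by
    filter_upwards [self_mem_nhdsWithin, ev 1 one_pos, ev δ0 hδ0,
      ev ((β - α) / 4) (by linarith), ev ((c / 4) ^ 2) (by positivity)] with δ h0 h1 h2 h3 h4
    obtain ⟨g1, g2⟩ := mesh_upper f α β C δ hαβ hC h0 h1.le hold
    refine ⟨h0, h1, ?_, g2⟩
    refine mesh_lower f α β c δ hc h0 (by linarith) ?_ hcont (osc δ h0 h2) g1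
    have := (Real.sqrt_lt' (by positivity)).2 h4
    linarith
  have hp : 0 < (β - α) / 4 * (c / 4) := mul_pos (by linarith) (by linarith)
  have hp' : 0 < (β - α + 3) * (2 * C + 3) := mul_pos (by linarith) (by linarith)
  refine tendsto_of_tendsto_of_tendsto_of_le_of_le' (hb ((β - α) / 4 * (c / 4)))
    (hb ((β - α + 3) * (2 * C + 3))) ?_ ?_
  · filter_upwards [hE] with δ ⟨h0, h1, h2, h3⟩
    have hl : Real.log δ < 0 := Real.log_neg h0 h1
    rw [hform _ δ hp h0 h1]
    have hsq : 0 < √δ := Real.sqrt_pos.2 h0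
    gcongr
    linarith
  · filter_upwards [hE] with δ ⟨h0, h1, h2, h3⟩
    have hl : Real.log δ < 0 := Real.log_neg h0 h1
    rw [hform _ δ hp' h0 h1]
    have hsq : 0 < √δ := Real.sqrt_pos.2 h0
    have : 0 < (β - α) / 4 * (c / 4) / (δ * √δ) := by positivity
    have := this.trans_le h2
    gcongr
    linarith

namespace RSData

variable {r t P M : ℕ → ℤ} {L : ℝ → ℝ}

/-- hypothesis on the limit function -/
def IsLim (M : ℕ → ℤ) (L : ℝ → ℝ) : Prop := ∀ x : ℝ, 0 < x →
      Tendsto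
        (fun k : ℕ => ((M (⌊(4 : ℝ) ^ k * x⌋).toNat + 1 : ℤ) : ℝ) / Real.sqrt ((4 : ℝ) ^ k * x))
        atTop (nhds (L x))

lemma sqrt4 (k : ℕ) : √((4 : ℝ) ^ k) = 2 ^ k := by
  rw [show (4 : ℝ) ^ k = (2 ^ k) ^ 2 by rw [← pow_mul, mul_comm, pow_mul]; norm_num]
  exact Real.sqrt_sq (by positivity)

lemma limG (hL : IsLim M L) (x : ℝ) (hx : 0 < x) :
    Tendsto (fun k : ℕ => (M ⌊(4 : ℝ) ^ k * x⌋₊ : ℝ) / 2 ^ k) atTop (nhds (√x * L x)) := by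
  have h1 := ((hL x hx).const_mul √x)
  have h2 : Tendsto (fun k : ℕ => ((1 : ℝ) / 2) ^ k) atTop (nhds 0) :=
    tendsto_pow_atTop_nhds_zero_of_lt_one (by norm_num) (by norm_num)
  have h3 := h1.sub h2
  rw [sub_zero] at h3
  refine h3.congr fun k => ?_
  have hs : 0 < √x := Real.sqrt_pos.2 hx
  rw [Real.sqrt_mul (by positivity), sqrt4, Int.floor_toNat]
  push_cast
  rw [div_pow, one_pow]
  field_simp
  ring

lemma G_val (h : RSData r t P M) (hL : IsLim M L) (n j : ℕ) (hn : 1 ≤ n) :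
    √((n : ℝ) / 4 ^ j) * L ((n : ℝ) / 4 ^ j) = (M n + 2) / 2 ^ j := by
  have hx : 0 < (n : ℝ) / 4 ^ j := by positivity
  have h1 := (limG hL _ hx).comp (tendsto_add_atTop_nat j)
  refine tendsto_nhds_unique h1 ?_
  have h2 : Tendsto (fun k : ℕ => ((1 : ℝ) / 2) ^ k) atTop (nhds 0) :=
    tendsto_pow_atTop_nhds_zero_of_lt_one (by norm_num) (by norm_num)
  have h3 := (tendsto_const_nhds (x := ((M n : ℝ) + 2) / 2 ^ j)).sub (h2.const_mul (2 / 2 ^ j))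
  rw [mul_zero, sub_zero] at h3
  refine h3.congr fun k => ?_
  simp only [Function.comp]
  have e : (4 : ℝ) ^ (k + j) * ((n : ℝ) / 4 ^ j) = ((4 ^ k * n : ℕ) : ℝ) := by
    push_cast; rw [pow_add]; field_simp
  rw [e, Nat.floor_natCast, h.M4pow n hn k, div_pow, one_pow, pow_add]
  push_cast
  field_simp

lemma G_holder (h : RSData r t P M) (hL : IsLim M L) (x y : ℝ) (hx : 0 < x) (hxy : x ≤ y) :
    |√y * L y - √x * L x| ≤ 14 * √(y - x) := by
  have h1 := ((limG hL y (hx.trans_le hxy)).sub (limG hL x hx)).abs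
  have h2 : Tendsto (fun k : ℕ => 14 * √(y - x + ((1 : ℝ) / 4) ^ k)) atTop
      (nhds (14 * √(y - x))) := by
    have h2 : Tendsto (fun k : ℕ => ((1 : ℝ) / 4) ^ k) atTop (nhds 0) :=
      tendsto_pow_atTop_nhds_zero_of_lt_one (by norm_num) (by norm_num)
    have := (((tendsto_const_nhds (x := y - x)).add h2).sqrt).const_mul 14
    simpa using this
  refine le_of_tendsto_of_tendsto' h1 h2 fun k => ?_
  have hmono : ⌊(4 : ℝ) ^ k * x⌋₊ ≤ ⌊(4 : ℝ) ^ k * y⌋₊ := Nat.floor_mono (by gcongr)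
  obtain ⟨m, hm⟩ := Nat.exists_eq_add_of_le hmono
  have hm' : (m : ℝ) ≤ 4 ^ k * (y - x + ((1 : ℝ) / 4) ^ k) := by
    have a1 : (⌊(4 : ℝ) ^ k * y⌋₊ : ℝ) ≤ 4 ^ k * y := Nat.floor_le (by
      have := hx.trans_le hxy; positivity)
    have a2 := Nat.lt_floor_add_one ((4 : ℝ) ^ k * x)
    rw [hm] at a1
    push_cast at a1
    have : (4 : ℝ) ^ k * (1 / 4) ^ k = 1 := by rw [← mul_pow]; norm_num
    linarith
  rw [hm, ← sub_div, abs_div, abs_of_pos (show (0 : ℝ) < 2 ^ k by positivity),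
    div_le_iff₀ (by positivity)]
  refine (h.Mdiff _ m).trans ?_
  calc 14 * √(m : ℝ) ≤ 14 * √(4 ^ k * (y - x + ((1 : ℝ) / 4) ^ k)) := by gcongr
    _ = _ := by rw [Real.sqrt_mul (by positivity), sqrt4]; ring

lemma L_bdd (h : RSData r t P M) (hL : IsLim M L) (x : ℝ) (hx : 0 < x) : |L x| ≤ 14 := by
  have h1 := (limG hL x hx).abs
  have hs : 0 < √x := Real.sqrt_pos.2 hx
  have h2 : |√x * L x| ≤ 14 * √x := by
    refine le_of_tendsto' h1 fun k => ?_
    rw [abs_div, abs_of_pos (show (0 : ℝ) < 2 ^ k by positivity), div_le_iff₀ (by positivity)]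
    have := h.Mdiff 0 ⌊(4 : ℝ) ^ k * x⌋₊
    rw [zero_add, h.M0, Int.cast_zero, sub_zero] at this
    refine this.trans ?_
    have h3 : (⌊(4 : ℝ) ^ k * x⌋₊ : ℝ) ≤ 4 ^ k * x := Nat.floor_le (by positivity)
    calc 14 * √(⌊(4 : ℝ) ^ k * x⌋₊ : ℝ) ≤ 14 * √(4 ^ k * x) := by gcongr
      _ = _ := by rw [Real.sqrt_mul (by positivity), sqrt4]; ring
  rw [abs_mul, abs_of_pos hs] at h2
  nlinarith

lemma L_holder_aux (h : RSData r t P M) (hL : IsLim M L) (α x y : ℝ) (hα : 0 < α) (hx : α < x)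
    (hxy : x ≤ y) : |L y - L x| ≤ 28 / √α * √(y - x) := by
  have hx0 : 0 < x := hα.trans hx
  have h1 := h.G_holder hL x y hx0 hxy
  have h2 := h.L_bdd hL x hx0
  have ha : 0 < √α := Real.sqrt_pos.2 hα
  have hay : √α ≤ √y := Real.sqrt_le_sqrt (by linarith)
  have hxy' : √x ≤ √y := Real.sqrt_le_sqrt hxy
  have h3 : √y - √x ≤ √(y - x) := by
    have h4 : √y ≤ √x + √(y - x) := by
      refine Real.sqrt_le_iff.2 ⟨by positivity, ?_⟩
      have s1 := Real.sq_sqrt hx0.le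
      have s2 := Real.sq_sqrt (sub_nonneg.2 hxy)
      nlinarith [mul_nonneg (Real.sqrt_nonneg x) (Real.sqrt_nonneg (y - x))]
    linarith
  have e : √y * (L y - L x) = (√y * L y - √x * L x) - L x * (√y - √x) := by ring
  have h5 : √y * |L y - L x| ≤ 28 * √(y - x) := by
    rw [← abs_of_nonneg (Real.sqrt_nonneg y), ← abs_mul, e]
    refine (abs_sub _ _).trans ?_
    rw [abs_mul, abs_of_nonneg (sub_nonneg.2 hxy')]
    have : |L x| * (√y - √x) ≤ 14 * √(y - x) :=
      mul_le_mul h2 h3 (sub_nonneg.2 hxy') (by norm_num)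
    linarith
  rw [div_mul_eq_mul_div, le_div_iff₀ ha]
  nlinarith [abs_nonneg (L y - L x)]

lemma L_holder (h : RSData r t P M) (hL : IsLim M L) (α x y : ℝ) (hα : 0 < α) (hx : α < x)
    (hy : α < y) : |L x - L y| ≤ 28 / √α * √|x - y| := by
  rcases le_total x y with hxy | hxy
  · rw [abs_sub_comm, abs_sub_comm x y, abs_of_nonneg (sub_nonneg.2 hxy)]
    exact h.L_holder_aux hL α x y hα hx hxy
  · rw [abs_of_nonneg (sub_nonneg.2 hxy)]
    exact h.L_holder_aux hL α y x hα hy hxy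

lemma L_osc (h : RSData r t P M) (hL : IsLim M L) (α β δ u : ℝ) (hα : 0 < α)
    (hδ : 0 < δ) (hδ1 : δ < 1) (hδ2 : 84 * √δ ≤ √α) (hu : α < u) (huβ : u + δ < β) :
    ∃ x ∈ Set.Icc u (u + δ), ∃ y ∈ Set.Icc u (u + δ), 1 / (6 * √β) * √δ ≤ L y - L x := by
  obtain ⟨i, hi1, hi2⟩ := exists_nat_pow_near_of_lt_one (x := δ / 2) (y := (1 / 4 : ℝ))
    (by linarith) (by linarith) (by norm_num) (by norm_num)
  obtain ⟨j, hj⟩ : ∃ j, j = i + 1 := ⟨_, rfl⟩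
  rw [← hj] at hi1
  have hd : δ ≤ 8 * (1 / 4 : ℝ) ^ j := by rw [hj, pow_succ]; linarith
  have hq : (1 / 4 : ℝ) ^ j = 1 / 4 ^ j := by rw [div_pow, one_pow]
  have h4 : (0 : ℝ) < 4 ^ j := by positivity
  have hu0 : 0 < u := hα.trans hu
  obtain ⟨n, hn⟩ : ∃ n, n = ⌈u * 4 ^ j⌉₊ := ⟨_, rfl⟩
  have hn1 : 1 ≤ n := by rw [hn, Nat.one_le_ceil_iff]; positivity
  have c1 : u * 4 ^ j ≤ n := by rw [hn]; exact Nat.le_ceil _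
  have c2 : (n : ℝ) < u * 4 ^ j + 1 := by rw [hn]; exact Nat.ceil_lt_add_one (by positivity)
  obtain ⟨x, hx⟩ : ∃ x, x = (n : ℝ) / 4 ^ j := ⟨_, rfl⟩
  obtain ⟨y, hy⟩ : ∃ y, y = ((n + 1 : ℕ) : ℝ) / 4 ^ j := ⟨_, rfl⟩
  have hyx : y = x + (1 / 4 : ℝ) ^ j := by rw [hy, hx, hq]; push_cast; ring
  have hux : u ≤ x := by rw [hx, le_div_iff₀ h4]; exact c1
  have hxu : x ≤ u + (1 / 4 : ℝ) ^ j := by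
    rw [hx, hq, div_le_iff₀ h4, add_mul];
    have : 1 / (4 : ℝ) ^ j * 4 ^ j = 1 := by field_simp
    linarith
  have hp : 0 < (1 / 4 : ℝ) ^ j := by positivity
  have hyu : y ≤ u + δ := by linarith
  have vx := h.G_val hL n j hn1
  have vy := h.G_val hL (n + 1) j (by omega)
  rw [← hx] at vx
  rw [← hy] at vy
  have hG : |√y * L y - √x * L x| = 1 / 2 ^ j := by
    rw [vx, vy, ← sub_div, abs_div, abs_of_pos (show (0 : ℝ) < 2 ^ j by positivity)]
    congr 1
    rcases h.step n with e | e <;> rw [e] <;> push_cast <;> ring_nf <;> norm_num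
  have hG2 : √δ / 3 ≤ 1 / 2 ^ j := by
    rw [div_le_iff₀ (by norm_num), Real.sqrt_le_left (by positivity)]
    have : (1 / 2 ^ j * 3 : ℝ) ^ 2 = 9 * (1 / 4) ^ j := by
      rw [mul_pow, div_pow, one_pow, ← pow_mul, mul_comm j 2, pow_mul, hq]; norm_num; ring
    rw [this]
    linarith
  have hx0 : 0 < x := by linarith
  have hL14 := h.L_bdd hL x hx0
  have hxy : x ≤ y := by linarith
  have hxy' : √x ≤ √y := Real.sqrt_le_sqrt hxy
  have ha : 0 < √α := Real.sqrt_pos.2 hα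
  have hax : √α ≤ √x := Real.sqrt_le_sqrt (by linarith)
  have hyβ : √y ≤ √β := Real.sqrt_le_sqrt (by linarith)
  have sx := Real.mul_self_sqrt hx0.le
  have sy := Real.mul_self_sqrt (hx0.le.trans hxy)
  have sd := Real.mul_self_sqrt hδ.le
  have hsd : 0 < √δ := Real.sqrt_pos.2 hδ
  have h3 : √y - √x ≤ √δ / 84 := by
    have a1 : (√y - √x) * √α ≤ δ := by
      calc (√y - √x) * √α ≤ (√y - √x) * (√y + √x) :=
            mul_le_mul_of_nonneg_left (by linarith [Real.sqrt_nonneg x]) (by linarith)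
        _ = y - x := by linear_combination sy - sx
        _ ≤ δ := by linarith
    have a2 : (√y - √x) * (84 * √δ) ≤ √δ * √δ := by
      rw [sd]
      exact (mul_le_mul_of_nonneg_left hδ2 (by linarith)).trans a1
    rw [le_div_iff₀ (by norm_num)]
    nlinarith
  have e : √y * L y - √x * L x = √y * (L y - L x) + L x * (√y - √x) := by ring
  have h5 : √δ / 6 ≤ √β * |L y - L x| := by
    have b1 := abs_add_le (√y * (L y - L x)) (L x * (√y - √x))
    rw [← e, hG, abs_mul, abs_mul, abs_of_nonneg (Real.sqrt_nonneg y),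
      abs_of_nonneg (sub_nonneg.2 hxy')] at b1
    have b2 : |L x| * (√y - √x) ≤ 14 * (√δ / 84) :=
      mul_le_mul hL14 h3 (sub_nonneg.2 hxy') (by norm_num)
    have b3 : √y * |L y - L x| ≤ √β * |L y - L x| := by gcongr
    linarith
  have hb : 0 < √β := by linarith
  have h6 : 1 / (6 * √β) * √δ ≤ |L y - L x| := by
    rw [div_mul_eq_mul_div, one_mul, div_le_iff₀ (by positivity)]
    linarith
  rcases le_abs.1 h6 with g | g
  · exact ⟨x, ⟨hux, by linarith⟩, y, ⟨by linarith, hyu⟩, g⟩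
  · exact ⟨y, ⟨by linarith, hyu⟩, x, ⟨hux, by linarith⟩, by linarith⟩

end RSData

/-- For any reals `0 < α < β`, the graph
`F = {(x, λ(x)) : α < x < β}` of the limit function
`λ(x) = lim_k ρ(⌊4^k x⌋)/√(4^k x)` (with `ρ(n) = M(n) + 1`) has box
dimension `3/2`: `log N_δ(F)/(−log δ) → 3/2` as `δ → 0⁺`. -/
theorem boxDimension_graph_lambda
    (r : ℕ → ℤ) (hr0 : r 0 = 1)
    (hre : ∀ n, r (2 * n) = r n)
    (hro : ∀ n, r (2 * n + 1) = (-1) ^ n * r n)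
    (M : ℕ → ℤ)
    (hM : ∀ n, IsGreatest (Set.range fun i => pSum r i n) (M n))
    (L : ℝ → ℝ)
    (hL : ∀ x : ℝ, 0 < x →
      Tendsto
        (fun k : ℕ => ((M (⌊(4 : ℝ) ^ k * x⌋).toNat + 1 : ℤ) : ℝ) / Real.sqrt ((4 : ℝ) ^ k * x))
        atTop (nhds (L x)))
    (α β : ℝ) (hα : 0 < α) (hαβ : α < β) :
    Tendsto
      (fun δ : ℝ =>
        Real.log (meshCount {p : ℝ × ℝ | ∃ x : ℝ, α < x ∧ x < β ∧ p = (x, L x)} δ) /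
          (-Real.log δ))
      (nhdsWithin 0 (Set.Ioi 0)) (nhds (3 / 2)) := by
  have h := rs_data r hr0 hre hro M hM
  have ha : 0 < √α := Real.sqrt_pos.2 hα
  have hb : 0 < √β := Real.sqrt_pos.2 (hα.trans hαβ)
  refine box_dim L α β (28 / √α) (1 / (6 * √β)) (min 1 ((√α / 84) ^ 2)) hαβ (by positivity)
    (by positivity) (by positivity) ?_ ?_
  · intro x y hx _ hy _
    exact h.L_holder hL α x y hα hx hy
  · intro δ hδ hδ0 u hu huβ
    refine h.L_osc hL α β δ u hα hδ (hδ0.trans_le (min_le_left _ _)) ?_ hu huβ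
    have := (Real.sqrt_lt' (by positivity)).2 (hδ0.trans_le (min_le_right _ _))
    linarith
end
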